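/- Every finite reduced vertex algebra is nilpotent: if $V$ is a vertex algebra finitely generated as a $\mathbb{C}[T]$-module with no non-zero abelian ideal, then the Lie conformal algebra $V^{\mathrm{conf}}$ satisfies $V^{[N]} = 0$ for some $N$, where $V^{[0]} = V$ and $V^{[n+1]} = [V, V^{[n]}]$. -/

import Mathlib

open scoped BigOperators

/-- A vertex algebra structure on a complex vector space `V`.
`P n a b` denotes the `n`-th product `a_{(n)} b`, `vac` is the vacuum `𝟙`,
and `D` is the infinitesimal translation operator `T`. -/
structure VertexAlgebra (V : Type*) [AddCommGroup V] [Module ℂ V] where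
  P : ℤ → V →ₗ[ℂ] V →ₗ[ℂ] V
  vac : V
  D : V →ₗ[ℂ] V
  field_ax : ∀ a b : V, ∃ N : ℕ, ∀ n : ℕ, N ≤ n → P n a b = 0
  vac_field : ∀ (n : ℤ) (a : V), P n vac a = if n = -1 then a else 0
  creation : ∀ a : V, P (-1) a vac = a
  creation_pos : ∀ (a : V) (n : ℤ), 0 ≤ n → P n a vac = 0
  D_vac : D vac = 0
  transl_inv : ∀ (n : ℤ) (a b : V), P n (D a) b = (-n : ℂ) • P (n - 1) a b
  D_deriv : ∀ (n : ℤ) (a b : V), D (P n a b) = P n (D a) b + P n a (D b)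
  skew : ∀ (n : ℤ) (a b : V),
    P n a b = ∑ᶠ j : ℕ, (((-1 : ℂ) ^ (n + j + 1)) / (j.factorial : ℂ)) • (D ^ j) (P (n + j) b a)
  borcherds : ∀ (m k : ℤ) (a b c : V),
    P m a (P k b c) - P k b (P m a c)
      = ∑ᶠ j : ℕ, ((Ring.choose m j : ℤ) : ℂ) • P (m + k - j) (P j a b) c

namespace VertexAlgebra

variable {V : Type*} [AddCommGroup V] [Module ℂ V] (W : VertexAlgebra V)

/-- An ideal of a vertex algebra: a `ℂ[T]`-submodule closed under all products with
arbitrary elements of `V`. -/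
def IsIdeal (I : Submodule ℂ V) : Prop :=
  (∀ x ∈ I, W.D x ∈ I) ∧ ∀ (a : V), ∀ b ∈ I, ∀ n : ℤ, W.P n a b ∈ I

/-- `A · B`: the span of all products `a_{(j)} b`, `a ∈ A`, `b ∈ B`, `j ∈ ℤ`. -/
def prodSpan (A B : Submodule ℂ V) : Submodule ℂ V :=
  Submodule.span ℂ {x | ∃ a ∈ A, ∃ b ∈ B, ∃ j : ℤ, x = W.P j a b}

/-- `[A, B]`: the span of all products `a_{(j)} b`, `a ∈ A`, `b ∈ B`, `j ≥ 0`. -/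
def posSpan (A B : Submodule ℂ V) : Submodule ℂ V :=
  Submodule.span ℂ {x | ∃ a ∈ A, ∃ b ∈ B, ∃ j : ℕ, x = W.P j a b}

/-- The sequence `I^1 = I`, `I^{n+1} = I^n · I^n` (indexed so that `nilSeq I n = I^{n+1}`). -/
def nilSeq (I : Submodule ℂ V) : ℕ → Submodule ℂ V
  | 0 => I
  | n + 1 => W.prodSpan (nilSeq I n) (nilSeq I n)

/-- A nil-ideal: an ideal whose sequence of iterated self-products vanishes. -/
def IsNilIdeal (I : Submodule ℂ V) : Prop :=
  W.IsIdeal I ∧ ∃ n : ℕ, W.nilSeq I n = ⊥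

/-- A vertex algebra is finite if it is a finitely generated `ℂ[T]`-module. -/
def IsFinite : Prop :=
  ∃ s : Finset V, ∀ v : V,
    v ∈ Submodule.span ℂ {x | ∃ g ∈ s, ∃ k : ℕ, x = (W.D ^ k) g}

/-- Abelian ideal. -/
def IsAbelianIdeal (I : Submodule ℂ V) : Prop :=
  W.IsIdeal I ∧ ∀ a ∈ I, ∀ b ∈ I, ∀ n : ℤ, W.P n a b = 0

end VertexAlgebra

namespace VertexAlgebra

variable {V : Type*} [AddCommGroup V] [Module ℂ V]

/-- The lower central series of a Lie conformal subalgebra `N` (as a submodule of `V`):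
`N^[0] = N`, `N^[k+1] = [N, N^[k]]`. -/
def lcsOf (W : VertexAlgebra V) (N : Submodule ℂ V) : ℕ → Submodule ℂ V
  | 0 => N
  | k + 1 => W.posSpan N (lcsOf W N k)

/-- A finite reduced vertex algebra: no non-zero abelian ideals. -/
def IsReduced (W : VertexAlgebra V) : Prop :=
  ∀ I : Submodule ℂ V, W.IsAbelianIdeal I → I = ⊥

end VertexAlgebra

section Chunk1
open Finset

namespace VertexAlgebra

variable {V : Type*} [AddCommGroup V] [Module ℂ V]

/-- Finite difference lemma. -/
lemma choose_coeff_zero (N : ℕ) : ∀ (G : ℕ → V) (m0 : ℤ)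
    (_ : ∀ m : ℤ, m ≤ m0 → ∑ j ∈ range N, ((Ring.choose m j : ℤ) : ℂ) • G j = 0),
    ∀ j < N, G j = 0 := by
  induction N with
  | zero => intro G m0 _ j hj; omega
  | succ N ih =>
    intro G m0 h
    have h1 : ∀ j < N, G (j + 1) = 0 := by
      apply ih (fun j => G (j + 1)) (m0 - 1)
      intro m hm
      have e1 := h (m + 1) (by omega)
      have e2 := h m (by omega)
      rw [sum_range_succ'] at e1 e2
      have e3 := congrArg₂ (· - ·) e1 e2
      simp only [Ring.choose_zero_right, add_sub_add_right_eq_sub, ← sum_sub_distrib, sub_zero] at e3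
      rw [← e3]
      apply sum_congr rfl
      intro j _
      rw [Ring.choose_succ_succ, ← sub_smul]
      congr 1
      push_cast
      ring
    have h0 : G 0 = 0 := by
      have e := h m0 le_rfl
      rw [sum_range_succ', sum_eq_zero] at e
      · simpa using e
      · intro j hj
        rw [h1 j (mem_range.1 hj), smul_zero]
    intro j hj
    cases j with
    | zero => exact h0
    | succ j => exact h1 j (by omega)

variable (W : VertexAlgebra V)

lemma P_D (n : ℤ) (a b : V) :
    W.P n a (W.D b) = W.D (W.P n a b) + (n : ℂ) • W.P (n - 1) a b := by
  rw [W.D_deriv, W.transl_inv]; module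

lemma field_int (a b : V) : ∃ N : ℕ, ∀ n : ℤ, (N : ℤ) ≤ n → W.P n a b = 0 := by
  obtain ⟨N, hN⟩ := W.field_ax a b
  refine ⟨N, fun n hn => ?_⟩
  obtain ⟨k, rfl⟩ := Int.eq_ofNat_of_zero_le (le_trans (Int.natCast_nonneg N) hn)
  exact hN k (by exact_mod_cast hn)

lemma comm_fin (a b : V) (N : ℕ) (hN : ∀ j : ℕ, N ≤ j → W.P j a b = 0) (m k : ℤ) (c : V) :
    W.P m a (W.P k b c) - W.P k b (W.P m a c)
      = ∑ j ∈ range N, ((Ring.choose m j : ℤ) : ℂ) • W.P (m + k - j) (W.P j a b) c := by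
  rw [W.borcherds]
  apply finsum_eq_sum_of_support_subset
  intro j hj
  by_contra hj2
  apply hj
  simp [hN j (by simpa using hj2)]

lemma comm_nat (a b : V) (m : ℕ) (k : ℤ) (c : V) :
    W.P m a (W.P k b c) = W.P k b (W.P m a c)
      + ∑ j ∈ range (m + 1), ((m.choose j : ℕ) : ℂ) • W.P (m + k - j) (W.P j a b) c := by
  rw [← sub_eq_iff_eq_add', W.borcherds]
  simp only [Ring.choose_natCast, Int.cast_natCast]
  apply finsum_eq_sum_of_support_subset
  intro j hj
  by_contra hj2
  apply hj
  have : m.choose j = 0 := Nat.choose_eq_zero_of_lt (by simpa using hj2)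
  simp [this]

lemma skew_fin (n : ℤ) (a b : V) (N : ℕ) (hN : ∀ j : ℕ, N ≤ j → W.P (n + j) b a = 0) :
    W.P n a b = ∑ j ∈ range N,
      (((-1 : ℂ) ^ (n + j + 1)) / (j.factorial : ℂ)) • (W.D ^ j) (W.P (n + j) b a) := by
  rw [W.skew]
  apply finsum_eq_sum_of_support_subset
  intro j hj
  by_contra hj2
  apply hj
  simp [hN j (by simpa using hj2)]

/-- Skew symmetry keeps membership in `D`-stable subspaces. -/
lemma skew_mem (S : Submodule ℂ V) (hS : ∀ x ∈ S, W.D x ∈ S) (n : ℤ) (a b : V)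
    (h : ∀ j : ℕ, W.P (n + j) b a ∈ S) : W.P n a b ∈ S := by
  obtain ⟨N, hN⟩ := W.field_int b a
  have hN' : ∀ j : ℕ, (N + n.natAbs) ≤ j → W.P (n + j) b a = 0 := fun j hj => hN _ (by omega)
  rw [W.skew_fin n a b _ hN']
  apply S.sum_mem
  intro j _
  apply S.smul_mem
  have hp : ∀ (k : ℕ) (x : V), x ∈ S → (W.D ^ k) x ∈ S := by
    intro k
    induction k with
    | zero => intro x hx; simpa using hx
    | succ k ih => intro x hx; rw [pow_succ]; exact ih _ (hS _ hx)
  exact hp _ _ (h j)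

/-- Key lemma. -/
lemma key (u x y : V) (h : ∀ k m : ℤ, W.P k u (W.P m x y) = 0) :
    (∀ m k : ℤ, W.P m x (W.P k u y) = 0) ∧
      ∀ (j : ℕ) (l : ℤ), W.P l (W.P j x u) y = 0 := by
  obtain ⟨N, hN⟩ := W.field_ax x u
  obtain ⟨M, hM⟩ := W.field_int u y
  have h1 : ∀ l : ℤ, ∀ j < N, W.P (l - j) (W.P j x u) y = 0 := by
    intro l
    apply choose_coeff_zero N (fun j => W.P (l - j) (W.P j x u) y) (l - M)
    intro m hm
    have e := W.comm_fin x u N hN m (l - m) y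
    rw [h, hM (l - m) (by omega)] at e
    simpa using e.symm
  have h2 : ∀ (j : ℕ) (l : ℤ), W.P l (W.P j x u) y = 0 := by
    intro j l
    by_cases hj : j < N
    · simpa using h1 (l + j) j hj
    · rw [hN j (by omega)]; simp
  refine ⟨fun m k => ?_, h2⟩
  have e := W.comm_fin x u N hN m k y
  rw [h, sub_zero] at e
  rw [e]
  apply sum_eq_zero
  intro j _
  rw [h2]; simp

/-- `x · y = 0`. -/
def Ort (x y : V) : Prop := ∀ n : ℤ, W.P n x y = 0

variable {W}

lemma Ort.symm {x y : V} (h : W.Ort x y) : W.Ort y x := by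
  intro n
  have := W.skew_mem ⊥ (by simp) n y x (fun j => by simp [h _])
  simpa using this

lemma Ort.prod {x y : V} (h : W.Ort x y) (v : V) (k : ℤ) : W.Ort x (W.P k v y) := by
  intro m
  exact (W.key v x y (fun k m => by rw [h m]; simp)).1 m k

lemma Ort.D {x y : V} (h : W.Ort x y) : W.Ort x (W.D y) := by
  intro m
  rw [W.P_D, h, h]; simp

variable (W)

/-- The annihilator of a set. -/
def annS (A : Set V) : Submodule ℂ V where
  carrier := {y | ∀ x ∈ A, W.Ort x y}
  add_mem' := by
    intro a b ha hb x hx n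
    rw [map_add, ha x hx, hb x hx, add_zero]
  zero_mem' := by intro x _ n; simp
  smul_mem' := by
    intro c a ha x hx n
    rw [map_smul, ha x hx, smul_zero]

lemma mem_annS {A : Set V} {y : V} : y ∈ W.annS A ↔ ∀ x ∈ A, W.Ort x y := Iff.rfl

lemma annS_ideal (A : Set V) : W.IsIdeal (W.annS A) :=
  ⟨fun _ hx a ha => (hx a ha).D, fun v _ hb n a ha => (hb a ha).prod v n⟩

variable {W}

lemma IsIdeal.right {I : Submodule ℂ V} (hI : W.IsIdeal I) {b : V} (hb : b ∈ I) (a : V) (n : ℤ) :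
    W.P n b a ∈ I :=
  W.skew_mem I hI.1 n b a (fun _ => hI.2 a b hb _)

lemma reduced_sq (hred : W.IsReduced) {x : V} (h : W.Ort x x) : x = 0 := by
  have hI : W.IsAbelianIdeal (W.annS {x} ⊓ W.annS (W.annS {x} : Set V)) := by
    refine ⟨⟨fun y hy => ⟨(W.annS_ideal _).1 y hy.1, (W.annS_ideal _).1 y hy.2⟩,
      fun a b hb n => ⟨(W.annS_ideal _).2 a b hb.1 n, (W.annS_ideal _).2 a b hb.2 n⟩⟩, ?_⟩
    intro a ha b hb n
    exact hb.2 a ha.1 n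
  have h0 := hred _ hI
  have : x ∈ W.annS {x} ⊓ W.annS (W.annS {x} : Set V) := by
    refine ⟨?_, ?_⟩
    · intro z hz; rw [Set.mem_singleton_iff.1 hz]; exact h
    · intro z hz; exact (hz x rfl).symm
  rw [h0] at this
  simpa using this

end VertexAlgebra
end Chunk1

section Chunk2
open Finset Polynomial

namespace VertexAlgebra

universe u
variable {V : Type u} [AddCommGroup V] [Module ℂ V] (W : VertexAlgebra V)

/-- The products on the quotient by an ideal. -/
noncomputable def quotP {I : Submodule ℂ V} (hI : W.IsIdeal I) (n : ℤ) :
    (V ⧸ I) →ₗ[ℂ] (V ⧸ I) →ₗ[ℂ] (V ⧸ I) :=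
  I.liftQ
    { toFun := fun a => I.mapQ I (W.P n a) (fun b hb => hI.2 a b hb n)
      map_add' := by
        intro a b
        ext x
        simp
      map_smul' := by
        intro c a
        ext x
        simp }
    (by
      intro a ha
      rw [LinearMap.mem_ker]
      ext x
      simpa using hI.right ha x n)

@[simp] lemma quotP_mk {I : Submodule ℂ V} (hI : W.IsIdeal I) (n : ℤ) (a b : V) :
    W.quotP hI n (Submodule.Quotient.mk a) (Submodule.Quotient.mk b)
      = Submodule.Quotient.mk (W.P n a b) := rfl

lemma quotD_pow {I : Submodule ℂ V} (h : I ≤ I.comap W.D) (k : ℕ) (a : V) :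
    ((I.mapQ I W.D h) ^ k) (Submodule.Quotient.mk a) = Submodule.Quotient.mk ((W.D ^ k) a) := by
  induction k with
  | zero => simp
  | succ k ih => rw [pow_succ', pow_succ', Module.End.mul_apply, ih]; rfl

/-- Quotient vertex algebra. -/
noncomputable def quot {I : Submodule ℂ V} (hI : W.IsIdeal I) : VertexAlgebra (V ⧸ I) where
  P := W.quotP hI
  vac := Submodule.Quotient.mk W.vac
  D := I.mapQ I W.D (fun x hx => hI.1 x hx)
  field_ax := by
    intro a b
    induction a using Submodule.Quotient.induction_on with | _ a
    induction b using Submodule.Quotient.induction_on with | _ b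
    obtain ⟨N, hN⟩ := W.field_ax a b
    exact ⟨N, fun n hn => by rw [quotP_mk, hN n hn]; rfl⟩
  vac_field := by
    intro n a
    induction a using Submodule.Quotient.induction_on with | _ a
    rw [quotP_mk, W.vac_field]
    split_ifs <;> rfl
  creation := by
    intro a
    induction a using Submodule.Quotient.induction_on with | _ a
    rw [quotP_mk, W.creation]
  creation_pos := by
    intro a n hn
    induction a using Submodule.Quotient.induction_on with | _ a
    rw [quotP_mk, W.creation_pos a n hn]; rfl
  D_vac := by
    rw [Submodule.mapQ_apply, W.D_vac]; rfl
  transl_inv := by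
    intro n a b
    induction a using Submodule.Quotient.induction_on with | _ a
    induction b using Submodule.Quotient.induction_on with | _ b
    rw [Submodule.mapQ_apply, quotP_mk, W.transl_inv]; rfl
  D_deriv := by
    intro n a b
    induction a using Submodule.Quotient.induction_on with | _ a
    induction b using Submodule.Quotient.induction_on with | _ b
    rw [quotP_mk]
    simp only [Submodule.mapQ_apply]
    rw [W.D_deriv]; rfl
  skew := by
    intro n a b
    induction a using Submodule.Quotient.induction_on with | _ a
    induction b using Submodule.Quotient.induction_on with | _ b
    simp only [quotP_mk, quotD_pow]
    obtain ⟨N, hN⟩ := W.field_int b a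
    have hN' : ∀ j : ℕ, (N + n.natAbs) ≤ j → W.P (n + j) b a = 0 := fun j hj => hN _ (by omega)
    rw [W.skew_fin n a b _ hN']
    symm
    rw [finsum_eq_sum_of_support_subset (s := range (N + n.natAbs))]
    · simp only [← Submodule.mkQ_apply, map_sum, map_smul]
    · intro j hj
      by_contra hj2
      apply hj
      simp [hN' j (by simpa using hj2)]
  borcherds := by
    intro m k a b c
    induction a using Submodule.Quotient.induction_on with | _ a
    induction b using Submodule.Quotient.induction_on with | _ b
    induction c using Submodule.Quotient.induction_on with | _ c
    simp only [quotP_mk]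
    obtain ⟨N, hN⟩ := W.field_ax a b
    rw [← Submodule.Quotient.mk_sub, W.comm_fin a b N hN]
    symm
    rw [finsum_eq_sum_of_support_subset (s := range N)]
    · simp only [← Submodule.mkQ_apply, map_sum, map_smul]
    · intro j hj
      by_contra hj2
      apply hj
      simp [hN j (by simpa using hj2)]

lemma quot_finite {I : Submodule ℂ V} (hI : W.IsIdeal I) (hfin : W.IsFinite) :
    (W.quot hI).IsFinite := by
  classical
  obtain ⟨s, hs⟩ := hfin
  refine ⟨s.image I.mkQ, fun v => ?_⟩
  induction v using Submodule.Quotient.induction_on with | _ v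
  have h := Submodule.mem_map_of_mem (f := I.mkQ) (hs v)
  rw [Submodule.map_span] at h
  refine Submodule.span_mono ?_ h
  rintro _ ⟨_, ⟨g, hg, k, rfl⟩, rfl⟩
  exact ⟨I.mkQ g, mem_image_of_mem _ hg, k, (W.quotD_pow (fun x hx => hI.1 x hx) k g).symm⟩

/-- Domain vertex algebras. -/
def IsDom : Prop := ∀ x y : V, W.Ort x y → x = 0 ∨ y = 0

/-- The `ℂ[X]`-module structure of a vertex algebra. -/
noncomputable abbrev hmod : Module ℂ[X] V := Module.compHom V (aeval W.D).toRingHom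

lemma hmod_smul (p : ℂ[X]) (v : V) :
    letI := W.hmod
    p • v = (aeval W.D p) v := rfl

lemma hmod_tower :
    letI := W.hmod
    IsScalarTower ℂ ℂ[X] V := by
  let := W.hmod
  constructor
  intro c p v
  rw [hmod_smul, hmod_smul, map_smul]; rfl

lemma hmod_finite (hfin : W.IsFinite) :
    letI := W.hmod
    Module.Finite ℂ[X] V := by
  let := W.hmod
  have := W.hmod_tower
  obtain ⟨s, hs⟩ := hfin
  refine ⟨⟨s, ?_⟩⟩
  rw [eq_top_iff]
  intro v _
  have h : Submodule.span ℂ {x | ∃ g ∈ s, ∃ k : ℕ, x = (W.D ^ k) g}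
      ≤ (Submodule.span ℂ[X] (s : Set V)).restrictScalars ℂ := by
    rw [Submodule.span_le]
    rintro _ ⟨g, hg, k, rfl⟩
    have : (W.D ^ k) g = (X ^ k : ℂ[X]) • g := by rw [hmod_smul]; simp
    rw [this]
    exact Submodule.smul_mem _ _ (Submodule.subset_span hg)
  exact h (hs v)

/-- A `D`-stable subspace as a `ℂ[X]`-submodule. -/
def toH [Module ℂ[X] V] [IsScalarTower ℂ ℂ[X] V] (hX : ∀ v : V, (X : ℂ[X]) • v = W.D v)
    (I : Submodule ℂ V) (hI : ∀ x ∈ I, W.D x ∈ I) : Submodule ℂ[X] V where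
  carrier := I
  add_mem' := I.add_mem
  zero_mem' := I.zero_mem
  smul_mem' := by
    intro p x hx
    induction p using Polynomial.induction_on' with
    | add p q hp hq => rw [add_smul]; exact I.add_mem hp hq
    | monomial n c =>
      rw [← smul_X_eq_monomial, smul_assoc]
      apply I.smul_mem
      induction n with
      | zero => simpa using hx
      | succ n ih => rw [pow_succ', mul_smul, hX]; exact hI _ ih

lemma reduce_dom (hfin : W.IsFinite) (hred : W.IsReduced) (c : V) (hc : c ≠ 0) :
    ∃ (I : Submodule ℂ V) (hI : W.IsIdeal I), (W.quot hI).IsDom ∧ c ∉ I := by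
  let := W.hmod
  have := W.hmod_tower
  have := W.hmod_finite hfin
  have hX : ∀ v : V, (X : ℂ[X]) • v = W.D v := by intro v; rw [hmod_smul]; simp
  let Ic := W.annS (W.annS {c} : Set V)
  have hIc : W.IsIdeal Ic := W.annS_ideal _
  let A : V → Submodule ℂ[X] V := fun u => W.toH hX (W.annS {u}) (W.annS_ideal _).1
  have hA : ∀ u x, x ∈ A u ↔ W.Ort u x := by
    intro u x
    constructor
    · intro h; exact h u rfl
    · intro h z hz; rw [Set.mem_singleton_iff.1 hz]; exact h
  have hne : (A '' {u | u ∈ Ic ∧ u ≠ 0}).Nonempty := by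
    refine ⟨A c, c, ⟨?_, hc⟩, rfl⟩
    intro z hz; exact (hz c rfl).symm
  obtain ⟨_, ⟨u, ⟨huI, hu0⟩, rfl⟩, hmax⟩ :=
    (wellFounded_gt (α := Submodule ℂ[X] V)).has_min _ hne
  refine ⟨W.annS {u}, W.annS_ideal _, ?_, ?_⟩
  · intro x y
    induction x using Submodule.Quotient.induction_on with | _ x
    induction y using Submodule.Quotient.induction_on with | _ y
    intro h
    have h1 : ∀ n, W.P n x y ∈ W.annS {u} := by
      intro n
      have := h n
      change W.quotP (W.annS_ideal _) n _ _ = 0 at this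
      rw [quotP_mk] at this
      exact (Submodule.Quotient.mk_eq_zero _).1 this
    by_cases hy : y ∈ W.annS {u}
    · right; exact (Submodule.Quotient.mk_eq_zero _).2 hy
    left
    rw [Submodule.Quotient.mk_eq_zero]
    have hk := (W.key u x y (fun k m => h1 m u rfl k)).1
    have : ∃ l, W.P l u y ≠ 0 := by
      by_contra hcon
      push Not at hcon
      exact hy ((hA u y).2 hcon)
    obtain ⟨l, hl⟩ := this
    have hle : A u ≤ A (W.P l u y) := by
      intro z hz
      rw [hA] at hz ⊢
      have h2 : W.Ort z u := hz.symm
      have h3 : W.Ort z (W.P l u y) := by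
        have h4 := (h2.prod y)
        intro n
        have := W.skew_mem (W.annS {z}) (W.annS_ideal _).1 l u y
          (fun j w hw => by rw [Set.mem_singleton_iff.1 hw]; exact h4 _)
        exact this z rfl n
      exact h3.symm
    have heq : A u = A (W.P l u y) := by
      by_contra hcon
      exact hmax (A (W.P l u y)) ⟨_, ⟨hIc.right huI y l, hl⟩, rfl⟩ (lt_of_le_of_ne hle hcon)
    have : x ∈ A (W.P l u y) := by
      rw [hA]
      have : W.Ort x (W.P l u y) := fun m => hk m l
      exact this.symm
    rw [← heq] at this
    exact this
  · intro hcu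
    have h1 : W.Ort u c := hcu u rfl
    have h2 : u ∈ W.annS {c} := by
      intro z hz; rw [Set.mem_singleton_iff.1 hz]; exact h1.symm
    exact hu0 (reduced_sq hred (huI u h2))

end VertexAlgebra
end Chunk2

section Chunk3
open Finset Polynomial


namespace VertexAlgebra

universe u
variable {V : Type u} [AddCommGroup V] [Module ℂ V] (W : VertexAlgebra V)

/-- Commuting elements: all nonnegative products vanish. -/
def Com (x y : V) : Prop := ∀ j : ℕ, W.P j x y = 0

variable {W}

lemma Com.symm {x y : V} (h : W.Com x y) : W.Com y x := by
  intro n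
  have := W.skew_mem ⊥ (by simp) n y x (fun j => by
    have := h (n + j)
    push_cast at this
    simp [this])
  simpa using this

lemma Com.comm {a b : V} (h : W.Com a b) (m k : ℤ) (c : V) :
    W.P m a (W.P k b c) = W.P k b (W.P m a c) := by
  have := W.comm_fin a b 0 (fun j _ => h j) m k c
  rw [sum_range_zero] at this
  exact sub_eq_zero.1 this

lemma Com.D {a b : V} (h : W.Com a b) : W.Com a (W.D b) := by
  intro j
  rw [W.P_D, h]
  cases j with
  | zero => simp
  | succ j => simp [h j]

lemma Com.prod {v x y : V} (h : W.Com v x) (h' : W.Com v y) (n : ℤ) : W.Com v (W.P n x y) := by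
  intro j
  rw [h.comm, h', map_zero]

lemma Com.add {v x y : V} (h : W.Com v x) (h' : W.Com v y) : W.Com v (x + y) := by
  intro j
  rw [map_add, h, h', add_zero]

lemma Com.smul {v x : V} (h : W.Com v x) (c : ℂ) : W.Com v (c • x) := by
  intro j
  rw [map_smul, h, smul_zero]

lemma Com.zero (v : V) : W.Com v 0 := by
  intro j
  rw [map_zero]

lemma Com.mul_comm {a b : V} (h : W.Com a b) : W.P (-1) a b = W.P (-1) b a := by
  rw [W.skew_fin (-1) a b 1]
  · simp
  · intro j hj
    have := h.symm (j - 1)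
    rw [show ((j - 1 : ℕ) : ℤ) = -1 + j by omega] at this
    exact this

lemma com_of_D {e : V} (he : W.D e = 0) (n : ℤ) (hn : n ≠ -1) (b : V) : W.P n e b = 0 := by
  have h := W.transl_inv (n + 1) e b
  rw [he] at h
  simp only [map_zero, LinearMap.zero_apply, add_sub_cancel_right] at h
  have h2 : (-((n + 1 : ℤ) : ℂ)) ≠ 0 := by
    rw [neg_ne_zero, Int.cast_ne_zero]; omega
  exact (smul_eq_zero.1 h.symm).resolve_left h2

lemma com_kerT {e : V} (he : W.D e = 0) (b : V) : W.Com e b :=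
  fun j => com_of_D he j (by omega) b

lemma IsDom.mul_ne (hd : W.IsDom) {e b : V} (he : W.D e = 0) (h : W.P (-1) e b = 0) :
    e = 0 ∨ b = 0 := by
  apply hd
  intro n
  by_cases hn : n = -1
  · rw [hn, h]
  · exact com_of_D he n hn b

variable (W)

/-- Compatible `ℂ[X]`-module structure together with the domain condition. -/
structure Good [Module ℂ[X] V] : Prop where
  hX : ∀ v : V, (X : ℂ[X]) • v = W.D v
  dom : W.IsDom

/-- Derivations. -/
def IsDer [Module ℂ[X] V] (f : V →ₗ[ℂ[X]] V) : Prop :=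
  ∀ (n : ℤ) (x y : V), f (W.P n x y) = W.P n (f x) y + W.P n x (f y)

section eig
variable {M : Type*} [AddCommGroup M] [Module ℂ M] [Module ℂ[X] M] [IsScalarTower ℂ ℂ[X] M]

lemma aeval_eig (f : Module.End ℂ[X] M) (w : M) (c : ℂ) (h : f w = c • w) (q : ℂ[X]) :
    (aeval f q) w = q.eval c • w := by
  induction q using Polynomial.induction_on' with
  | add p q hp hq => simp [hp, hq, add_smul]
  | monomial n a =>
    have : ∀ n : ℕ, (f ^ n) w = c ^ n • w := by
      intro n
      induction n with
      | zero => simp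
      | succ n ih => 
        rw [pow_succ', Module.End.mul_apply, ih, LinearMap.map_smul_of_tower, h, smul_smul, pow_succ]
    rw [aeval_monomial, eval_monomial, Module.End.mul_apply, this, mul_smul]
    rfl

lemma no_inf_eig [Module.Finite ℂ[X] M] (f : Module.End ℂ[X] M) (α : ℕ → ℂ)
    (hα : Function.Injective α) (w : ℕ → M) (hw : ∀ n, w n ≠ 0)
    (h : ∀ n, f (w n) = α n • w n) : False := by
  let q : ℕ → ℂ[X] := fun n => ∏ i ∈ range n, (X - C (α i))
  let N : ℕ →o Submodule ℂ[X] M :=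
    ⟨fun n => LinearMap.ker (aeval f (q n)), monotone_nat_of_le_succ (by
      intro n x hx
      rw [LinearMap.mem_ker] at hx ⊢
      have : q (n + 1) = (X - C (α n)) * q n := by
        simp only [q]; rw [prod_range_succ, mul_comm]
      rw [this, map_mul, Module.End.mul_apply, hx, map_zero])⟩
  obtain ⟨n, hn⟩ := monotone_stabilizes_iff_noetherian.2 (inferInstance : IsNoetherian ℂ[X] M) N
  have h1 : w n ∈ N (n + 1) := by
    change _ ∈ LinearMap.ker _
    rw [LinearMap.mem_ker, aeval_eig f (w n) (α n) (h n)]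
    simp [q, prod_range_succ]
  rw [← hn (n + 1) (by omega)] at h1
  change _ ∈ LinearMap.ker _ at h1
  rw [LinearMap.mem_ker, aeval_eig f (w n) (α n) (h n), smul_eq_zero] at h1
  rcases h1 with h1 | h1
  · simp only [q, eval_prod, prod_eq_zero_iff, eval_sub, eval_X, eval_C, sub_eq_zero] at h1
    obtain ⟨i, hi, hi2⟩ := h1
    have := hα hi2
    simp at hi; omega
  · exact hw n h1

end eig

variable {W}
variable [Module ℂ[X] V] [IsScalarTower ℂ ℂ[X] V] [Module.Finite ℂ[X] V]

lemma pow2_inj {c : ℂ} (hc : c ≠ 0) : Function.Injective (fun n : ℕ => (2 : ℂ) ^ n * c) := by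
  intro a b h
  have h1 := mul_right_cancel₀ hc h
  have h2 : (2 : ℕ) ^ a = 2 ^ b := by exact_mod_cast h1
  exact Nat.pow_right_injective le_rfl h2

lemma Good.der_eig (hW : W.Good) {f : V →ₗ[ℂ[X]] V} (hf : W.IsDer f) {w : V} (hw : w ≠ 0) {c : ℂ}
    (h : f w = c • w) : c = 0 := by
  by_contra hc
  have h1 : ∀ n : ℕ, ∃ w : V, w ≠ 0 ∧ f w = ((2 : ℂ) ^ n * c) • w := by
    intro n
    induction n with
    | zero => exact ⟨w, hw, by simpa using h⟩
    | succ n ih =>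
      obtain ⟨w, hw, h⟩ := ih
      have : ∃ m, W.P m w w ≠ 0 := by
        by_contra hcon
        push Not at hcon
        rcases hW.dom w w hcon with h | h <;> exact hw h
      obtain ⟨m, hm⟩ := this
      refine ⟨_, hm, ?_⟩
      rw [hf, h]
      simp only [map_smul, LinearMap.smul_apply]
      rw [pow_succ]
      module
  choose w hw h using h1
  exact no_inf_eig f _ (pow2_inj hc) w hw h

lemma Good.D_eig (hW : W.Good) {w : V} (hw : w ≠ 0) {c : ℂ}
    (h : W.D w = c • w) : c = 0 := by
  apply hW.der_eig (f := LinearMap.lsmul ℂ[X] V X) (w := w) (c := c) ?_ hw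
  · simpa [hW.hX] using h
  · intro n x y
    simp [hW.hX, W.D_deriv]

lemma Good.D_sq (hW : W.Good) {x : V} (h : W.D (W.D x) = 0) : W.D x = 0 := by
  by_contra hne
  have hL : ∀ (w : V) (m : ℕ), (W.D ^ (m + 1)) (W.P (-1) x w) =
      W.P (-1) x ((W.D ^ (m + 1)) w) + ((m + 1 : ℕ) : ℂ) • W.P (-1) (W.D x) ((W.D ^ m) w) := by
    intro w m
    induction m with
    | zero => simp [W.D_deriv, add_comm]
    | succ m ih =>
      rw [pow_succ' _ (m + 1), Module.End.mul_apply, ih, map_add, W.D_deriv, map_smul, W.D_deriv (-1) (W.D x), h]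
      rw [Module.End.mul_apply, pow_succ' _ m, Module.End.mul_apply]
      push_cast
      simp only [map_zero, LinearMap.zero_apply]
      module
  have h1 : ∀ n : ℕ, ∃ w, (W.D ^ n) w ≠ 0 ∧ (W.D ^ (n + 1)) w = 0 := by
    intro n
    induction n with
    | zero => exact ⟨W.D x, by simpa using hne, by simpa using h⟩
    | succ n ih =>
      obtain ⟨w, hw, hw2⟩ := ih
      refine ⟨W.P (-1) x w, ?_, ?_⟩
      · rw [hL, hw2, map_zero, zero_add]
        intro h0
        rw [smul_eq_zero] at h0
        rcases h0 with h0 | h0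
        · norm_cast at h0
        · rcases hW.dom.mul_ne h h0 with h0 | h0
          · exact hne h0
          · exact hw h0
      · rw [hL, hw2, pow_succ', Module.End.mul_apply, hw2]; simp
  have hp : ∀ (n : ℕ) (w : V), (X ^ n : ℂ[X]) • w = (W.D ^ n) w := by
    intro n
    induction n with
    | zero => simp
    | succ n ih => intro w; rw [pow_succ', mul_smul, hW.hX, ih, pow_succ', Module.End.mul_apply]
  let N : ℕ →o Submodule ℂ[X] V :=
    ⟨fun n => LinearMap.ker (LinearMap.lsmul ℂ[X] V (X ^ n)), monotone_nat_of_le_succ (by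
      intro n x hx
      rw [LinearMap.mem_ker] at hx ⊢
      rw [LinearMap.lsmul_apply] at hx ⊢
      rw [pow_succ', mul_smul, hx, smul_zero])⟩
  obtain ⟨n, hn⟩ := monotone_stabilizes_iff_noetherian.2 (inferInstance : IsNoetherian ℂ[X] V) N
  obtain ⟨w, hw, hw2⟩ := h1 n
  have h3 : w ∈ N (n + 1) := by
    change _ ∈ LinearMap.ker _
    rw [LinearMap.mem_ker, LinearMap.lsmul_apply, hp, hw2]
  rw [← hn (n + 1) (by omega)] at h3
  change _ ∈ LinearMap.ker _ at h3
  rw [LinearMap.mem_ker, LinearMap.lsmul_apply, hp] at h3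
  exact hw h3

lemma Good.torsion (hW : W.Good) (d : ℕ) : ∀ (h : ℂ[X]) (x : V), h.natDegree ≤ d → h ≠ 0 →
    h • x = 0 → W.D x = 0 := by
  induction d with
  | zero =>
    intro h x hd h0 hx
    obtain ⟨c, rfl⟩ := natDegree_eq_zero.1 (Nat.le_zero.1 hd)
    have : (C c : ℂ[X]) • x = c • x := by
      rw [← algebraMap_smul ℂ[X] c x]; rfl
    rw [this, smul_eq_zero] at hx
    rcases hx with hx | hx
    · simp [hx] at h0
    · simp [hx]
  | succ d ih =>
    intro h x hd h0 hx
    by_cases hd0 : h.natDegree = 0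
    · exact ih h x (by omega) h0 hx
    obtain ⟨α, hα⟩ := Complex.exists_root (f := h) (natDegree_pos_iff_degree_pos.1 (by omega))
    obtain ⟨g, rfl⟩ := dvd_iff_isRoot.2 hα
    have hg0 : g ≠ 0 := right_ne_zero_of_mul h0
    have hgd : g.natDegree ≤ d := by
      rw [natDegree_mul (left_ne_zero_of_mul h0) hg0, natDegree_X_sub_C] at hd
      omega
    by_cases ha : α = 0
    · subst ha
      rw [C_0, sub_zero, mul_comm, mul_smul, hW.hX] at hx
      exact hW.D_sq (ih g _ hgd hg0 hx)
    · apply ih g x hgd hg0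
      by_contra hne
      apply ha
      apply hW.D_eig hne
      rw [mul_smul, sub_smul, sub_eq_zero, hW.hX] at hx
      rw [hx, ← algebraMap_smul ℂ[X] α]; rfl

lemma Good.tors (hW : W.Good) {h : ℂ[X]} {x : V} (h0 : h ≠ 0) (hx : h • x = 0) : W.D x = 0 :=
  hW.torsion _ h x le_rfl h0 hx

/-- Subalgebras -/
structure IsSub (W : VertexAlgebra V) (S : Submodule ℂ[X] V) : Prop where
  vac : W.vac ∈ S
  prod : ∀ (n : ℤ), ∀ x ∈ S, ∀ y ∈ S, W.P n x y ∈ S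

/-- Restriction of `D`. -/
def subD (W : VertexAlgebra V) (hX : ∀ v : V, (X : ℂ[X]) • v = W.D v)
    (S : Submodule ℂ[X] V) : S →ₗ[ℂ] S where
  toFun x := ⟨W.D x, by rw [← hX]; exact S.smul_mem X x.2⟩
  map_add' := by intros; ext; simp
  map_smul' := by intros; ext; simp

lemma subD_pow (W : VertexAlgebra V) (hX : ∀ v : V, (X : ℂ[X]) • v = W.D v)
    (S : Submodule ℂ[X] V) (k : ℕ) : ∀ x : S, (((W.subD hX S) ^ k) x : V) = (W.D ^ k) x := by
  induction k with
  | zero => intro x; rfl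
  | succ k ih => intro x; rw [pow_succ, pow_succ, Module.End.mul_apply, Module.End.mul_apply, ih]; rfl

/-- The vertex algebra structure on a subalgebra. -/
noncomputable def sub (W : VertexAlgebra V) (hX : ∀ v : V, (X : ℂ[X]) • v = W.D v)
    {S : Submodule ℂ[X] V} (hS : W.IsSub S) : VertexAlgebra S where
  P n := LinearMap.mk₂ ℂ (fun x y => ⟨W.P n x y, hS.prod n x x.2 y y.2⟩)
    (by intros; ext; simp) (by intros; ext; simp) (by intros; ext; simp) (by intros; ext; simp)
  vac := ⟨W.vac, hS.vac⟩
  D := W.subD hX S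
  field_ax := by
    intro a b
    obtain ⟨N, hN⟩ := W.field_ax a b
    exact ⟨N, fun n hn => Subtype.ext (hN n hn)⟩
  vac_field := by
    intro n a
    apply Subtype.ext
    change W.P n W.vac a = _
    rw [W.vac_field]
    split_ifs <;> rfl
  creation := fun a => Subtype.ext (W.creation a)
  creation_pos := fun a n hn => Subtype.ext (W.creation_pos a n hn)
  D_vac := Subtype.ext W.D_vac
  transl_inv := fun n a b => Subtype.ext (W.transl_inv n a b)
  D_deriv := fun n a b => Subtype.ext (W.D_deriv n a b)
  skew := by
    intro n a b
    obtain ⟨N, hN⟩ := W.field_int (b : V) a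
    have hN' : ∀ j : ℕ, (N + n.natAbs) ≤ j → W.P (n + j) b a = 0 := fun j hj => hN _ (by omega)
    rw [finsum_eq_sum_of_support_subset (s := range (N + n.natAbs))]
    · apply Subtype.ext
      change W.P n a b = S.subtype _
      rw [W.skew_fin n a b _ hN', map_sum]
      apply sum_congr rfl
      intro j _
      change _ = (_ : ℂ) • (_ : V)
      congr 1
      exact (W.subD_pow hX S j ⟨W.P (n + j) b a, hS.prod _ b b.2 a a.2⟩).symm
    · intro j hj
      by_contra hj2
      apply hj
      have e : (⟨W.P (n + j) b a, hS.prod _ b b.2 a a.2⟩ : S) = 0 :=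
        Subtype.ext (hN' j (by simpa using hj2))
      simp only [LinearMap.mk₂_apply]
      rw [e]
      exact (congrArg _ (map_zero _)).trans (smul_zero _)
  borcherds := by
    intro m k a b c
    obtain ⟨N, hN⟩ := W.field_ax (a : V) b
    rw [finsum_eq_sum_of_support_subset (s := range N)]
    · apply Subtype.ext
      change W.P m a (W.P k b c) - W.P k b (W.P m a c) = S.subtype _
      rw [W.comm_fin (a : V) b N hN, map_sum]
      rfl
    · intro j hj
      by_contra hj2
      apply hj
      have e : (⟨W.P j a b, hS.prod _ a a.2 b b.2⟩ : S) = 0 :=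
        Subtype.ext (hN j (by simpa using hj2))
      simp only [LinearMap.mk₂_apply]
      apply Subtype.ext
      change (_ : ℂ) • (W.P _ ((⟨W.P j a b, hS.prod _ a a.2 b b.2⟩ : S) : V) c) = 0
      rw [e]
      simp

@[simp] lemma sub_P (W : VertexAlgebra V) (hX : ∀ v : V, (X : ℂ[X]) • v = W.D v)
    {S : Submodule ℂ[X] V} (hS : W.IsSub S) (n : ℤ) (x y : S) :
    (((W.sub hX hS).P n x y : S) : V) = W.P n x y := rfl

@[simp] lemma sub_D (W : VertexAlgebra V) (hX : ∀ v : V, (X : ℂ[X]) • v = W.D v)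
    {S : Submodule ℂ[X] V} (hS : W.IsSub S) (x : S) :
    (((W.sub hX hS).D x : S) : V) = W.D x := rfl

lemma Good.sub (hW : W.Good) {S : Submodule ℂ[X] V} (hS : W.IsSub S) : (W.sub hW.hX hS).Good where
  hX := fun v => Subtype.ext (hW.hX v)
  dom := by
    intro x y h
    have : W.Ort (x : V) y := fun n => congrArg Subtype.val (h n)
    rcases hW.dom _ _ this with h | h
    · left; exact Subtype.ext h
    · right; exact Subtype.ext h

end VertexAlgebra
end Chunk3

section Chunk4
open Finset Polynomial

namespace VertexAlgebra

lemma common_eig {E : Type*} [AddCommGroup E] [Module ℂ E] (ops : Set (E →ₗ[ℂ] E)) (n : ℕ) :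
    ∀ (U : Submodule ℂ E), FiniteDimensional ℂ U → Module.finrank ℂ U ≤ n → U ≠ ⊥ →
    (∀ f ∈ ops, ∀ x ∈ U, f x ∈ U) →
    (∀ f ∈ ops, ∀ g ∈ ops, ∀ x ∈ U, f (g x) = g (f x)) →
    ∃ c ∈ U, c ≠ 0 ∧ ∀ f ∈ ops, ∃ χ : ℂ, f c = χ • c := by
  induction n with
  | zero =>
    intro U hU hn hne
    exact absurd (Submodule.finrank_eq_zero.1 (Nat.le_zero.1 hn)) hne
  | succ n ih =>
    intro U hU hn hne hinv hcomm
    by_cases hall : ∀ f ∈ ops, ∃ χ : ℂ, ∀ x ∈ U, f x = χ • x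
    · obtain ⟨c, hc, hc0⟩ := Submodule.exists_mem_ne_zero_of_ne_bot hne
      exact ⟨c, hc, hc0, fun f hf => (hall f hf).imp fun χ h => h c hc⟩
    push Not at hall
    obtain ⟨f, hf, hf2⟩ := hall
    have : Nontrivial U := Submodule.nontrivial_iff_ne_bot.2 hne
    obtain ⟨μ, hμ⟩ := Module.End.exists_eigenvalue (LinearMap.restrict f (hinv f hf))
    obtain ⟨w, hw⟩ := hμ.exists_hasEigenvector
    let U' : Submodule ℂ E := U ⊓ LinearMap.ker (f - μ • LinearMap.id)
    have hU' : ∀ x, x ∈ U' ↔ x ∈ U ∧ f x = μ • x := by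
      intro x
      simp [U', sub_eq_zero]
    have hle : U' ≤ U := inf_le_left
    have hlt : U' < U := by
      refine lt_of_le_of_ne hle ?_
      intro heq
      obtain ⟨x, hx, hx2⟩ := hf2 μ
      rw [← heq] at hx
      exact hx2 ((hU' x).1 hx).2
    have hfd : FiniteDimensional ℂ U' := Submodule.finiteDimensional_of_le hle
    have hrk : Module.finrank ℂ U' ≤ n := by
      have := Submodule.finrank_lt_finrank_of_lt hlt
      omega
    suffices hs : ∃ c ∈ U', c ≠ 0 ∧ ∀ f ∈ ops, ∃ χ : ℂ, f c = χ • c by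
      obtain ⟨c, hc, hc0, h⟩ := hs
      exact ⟨c, hle hc, hc0, h⟩
    refine ih U' hfd hrk ?_ ?_ ?_
    · intro h0
      have hw1 : (w : E) ∈ U' := by
        rw [hU']
        refine ⟨w.2, ?_⟩
        exact congrArg Subtype.val hw.apply_eq_smul
      rw [h0] at hw1
      exact hw.2 (Subtype.ext (by simpa using hw1))
    · intro g hg x hx
      rw [hU'] at hx ⊢
      refine ⟨hinv g hg x hx.1, ?_⟩
      rw [hcomm f hf g hg x hx.1, hx.2, map_smul]
    · intro g hg g' hg' x hx
      exact hcomm g hg g' hg' x (hle hx)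

universe u
variable {V : Type u} [AddCommGroup V] [Module ℂ V] {W : VertexAlgebra V}

lemma neg_mode (k : ℕ) : ∀ (a b : V),
    (k.factorial : ℂ) • W.P (-1 - k) a b = W.P (-1) ((W.D ^ k) a) b := by
  induction k with
  | zero => intro a b; simp
  | succ k ih =>
    intro a b
    rw [pow_succ, Module.End.mul_apply, ← ih, W.transl_inv, smul_smul]
    rw [show (-1 - (k : ℤ) - 1) = -1 - ((k + 1 : ℕ) : ℤ) by push_cast; ring]
    congr 1
    rw [Nat.factorial_succ]; push_cast; ring

lemma ort_of_neg {a b : V} (h : W.Com a b) (h' : ∀ k : ℕ, W.P (-1) ((W.D ^ k) a) b = 0) :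
    W.Ort a b := by
  intro n
  by_cases hn : 0 ≤ n
  · obtain ⟨k, rfl⟩ := Int.eq_ofNat_of_zero_le hn
    exact h k
  · obtain ⟨k, hk⟩ := Int.eq_ofNat_of_zero_le (show 0 ≤ -1 - n by omega)
    have := h' k
    rw [← neg_mode, smul_eq_zero] at this
    rw [show n = -1 - k by omega]
    exact this.resolve_left (by exact_mod_cast k.factorial_ne_zero)

lemma exists_max_mode (x y : V) (h : ∃ n : ℤ, W.P n x y ≠ 0) :
    ∃ M : ℤ, W.P M x y ≠ 0 ∧ ∀ m, M < m → W.P m x y = 0 := by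
  obtain ⟨N, hN⟩ := W.field_int x y
  obtain ⟨M, h1, h2⟩ := Int.exists_greatest_of_bdd (P := fun n => W.P n x y ≠ 0)
    ⟨N, fun z hz => by by_contra hc; exact hz (hN z (by omega))⟩ h
  exact ⟨M, h1, fun m hm => by by_contra hc; have := h2 m hc; omega⟩

lemma top_identity {g x y : V} (hgy : W.Com g y) (M : ℤ)
    (hM : ∀ m, M < m → W.P m x y = 0) :
    W.P (M - 1) (W.P (-1) g x) y
      = W.P (-1) g (W.P (M - 1) x y) + W.P (-1) (W.D g) (W.P M x y) := by
  have hM' : ∀ m, M < m → W.P m y x = 0 := by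
    intro m hm
    rw [W.skew_fin m y x 0]
    · simp
    · intro j _
      exact hM _ (by omega)
  have e1 : W.P M y x = ((-1 : ℂ) ^ (M + 1)) • W.P M x y := by
    rw [W.skew_fin M y x 1]
    · simp
    · intro j hj
      exact hM _ (by omega)
  have e2 : W.P (M - 1) y x = ((-1 : ℂ) ^ M) • W.P (M - 1) x y
      + ((-1 : ℂ) ^ (M + 1)) • W.D (W.P M x y) := by
    rw [W.skew_fin (M - 1) y x 2]
    · simp [sum_range_succ]
    · intro j hj
      exact hM _ (by omega)
  have hyg : ∀ m, W.P m y (W.P (-1) g x) = W.P (-1) g (W.P m y x) := fun m => hgy.symm.comm _ _ _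
  have e3 : W.P (M - 1) (W.P (-1) g x) y = ((-1 : ℂ) ^ M) • W.P (M - 1) y (W.P (-1) g x)
      + ((-1 : ℂ) ^ (M + 1)) • W.D (W.P M y (W.P (-1) g x)) := by
    rw [W.skew_fin (M - 1) _ y 2]
    · simp [sum_range_succ]
    · intro j hj
      rw [hyg, hM' _ (by omega), map_zero]
  rw [e3, hyg, hyg, e1, e2]
  simp only [map_add, map_smul, W.D_deriv]
  rw [zpow_add_one₀ (by norm_num)]
  have hs : (-1 : ℂ) ^ M * (-1) ^ M = 1 := by
    rw [← mul_zpow]; simp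
  simp only [smul_add, smul_smul]
  have h1 : (-1 : ℂ) ^ M * ((-1) ^ M * -1) = -1 := by linear_combination -hs
  have h2 : (-1 : ℂ) ^ M * (-1) * ((-1) ^ M * -1) = 1 := by linear_combination hs
  rw [hs, h1, h2]
  module

variable [Module ℂ[X] V] [IsScalarTower ℂ ℂ[X] V]

/-- Commutant of a set. -/
def cent (W : VertexAlgebra V) (hX : ∀ v : V, (X : ℂ[X]) • v = W.D v) (S : Set V) :
    Submodule ℂ[X] V :=
  W.toH hX
    { carrier := {x | ∀ s ∈ S, W.Com s x}
      add_mem' := fun ha hb s hs => (ha s hs).add (hb s hs)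
      zero_mem' := fun s _ => Com.zero s
      smul_mem' := fun c _ ha s hs => (ha s hs).smul c }
    (fun _ hx s hs => (hx s hs).D)

lemma mem_cent (hX : ∀ v : V, (X : ℂ[X]) • v = W.D v) {S : Set V} {x : V} :
    x ∈ W.cent hX S ↔ ∀ s ∈ S, W.Com s x := Iff.rfl

lemma cent_prod (hX : ∀ v : V, (X : ℂ[X]) • v = W.D v) {S : Set V} {x y : V}
    (hx : x ∈ W.cent hX S) (hy : y ∈ W.cent hX S) (n : ℤ) : W.P n x y ∈ W.cent hX S :=
  fun s hs => (hx s hs).prod (hy s hs) n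

lemma pow_smul_D (hX : ∀ v : V, (X : ℂ[X]) • v = W.D v) (k : ℕ) (v : V) :
    (X ^ k : ℂ[X]) • v = (W.D ^ k) v := by
  induction k with
  | zero => simp
  | succ n ih => rw [pow_succ', mul_smul, hX, ih, pow_succ', Module.End.mul_apply]

/-- The map `h ↦ (h g) · c`. -/
noncomputable def phi (W : VertexAlgebra V) (g c : V) : ℂ[X] →ₗ[ℂ] V :=
  ((W.P (-1)).flip c) ∘ₗ ((LinearMap.toSpanSingleton ℂ[X] V g).restrictScalars ℂ)

@[simp] lemma phi_apply (g c : V) (h : ℂ[X]) : W.phi g c h = W.P (-1) (h • g) c := rfl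

lemma phi_compl {E F : Type*} [AddCommGroup E] [Module ℂ E] [AddCommGroup F] [Module ℂ F]
    (φ : E →ₗ[ℂ] F) (h : (LinearMap.range φ).FG) :
    ∃ G : Submodule ℂ E, G.FG ∧ ∀ x, ∃ y ∈ G, φ (x - y) = 0 := by
  obtain ⟨G, hG⟩ := (LinearMap.ker φ).exists_isCompl
  refine ⟨G, ?_, ?_⟩
  · rw [← Submodule.fg_top, ← Module.finite_def]
    have : Module.Finite ℂ (LinearMap.range φ) := Module.Finite.iff_fg.2 h
    have e := (Submodule.quotientEquivOfIsCompl _ _ hG).symm.trans φ.quotKerEquivRange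
    exact Module.Finite.equiv e.symm
  · intro x
    have : x ∈ LinearMap.ker φ ⊔ G := by rw [hG.sup_eq_top]; trivial
    obtain ⟨k, hk, g, hg, rfl⟩ := Submodule.mem_sup.1 this
    exact ⟨g, hg, by simpa using hk⟩

lemma smul_prod_mem (hX : ∀ v : V, (X : ℂ[X]) • v = W.D v) (c g1 g2 : V) (S : Submodule ℂ V)
    (hS : ∀ h1 h2 : ℂ[X], W.P (-1) (W.P (-1) (h1 • g1) (h2 • g2)) c ∈ S) (h : ℂ[X]) :
    W.P (-1) (h • W.P (-1) g1 g2) c ∈ S := by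
  have key : ∀ n : ℕ, ∀ h1 h2 : ℂ[X],
      W.P (-1) ((X ^ n : ℂ[X]) • (W.P (-1) (h1 • g1) (h2 • g2))) c ∈ S := by
    intro n
    induction n with
    | zero => intro h1 h2; simpa using hS h1 h2
    | succ n ih =>
      intro h1 h2
      rw [pow_succ, mul_smul, hX, W.D_deriv, smul_add, map_add, LinearMap.add_apply, ← hX, ← hX,
        ← mul_smul, ← mul_smul]
      exact S.add_mem (ih _ _) (ih _ _)
  induction h using Polynomial.induction_on' with
  | add p q hp hq => rw [add_smul, map_add]; exact S.add_mem hp hq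
  | monomial n a =>
    rw [← smul_X_eq_monomial, smul_assoc, map_smul, LinearMap.smul_apply]
    apply S.smul_mem
    simpa using key n 1 1

variable [Module.Finite ℂ[X] V]

lemma Good.lemF (hW : W.Good) {v c : V} (hvv : W.Com v v) (hDv : W.D v ≠ 0) (hc : c ≠ 0)
    (hvc : W.Com v c) : ¬ (LinearMap.range (W.phi v c)).FG := by
  intro hfg
  have hX := hW.hX
  let Cv := W.cent hX {v}
  let A := W.cent hX (Cv : Set V)
  have hcC : c ∈ Cv := by intro s hs; rw [Set.mem_singleton_iff.1 hs]; exact hvc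
  have hvC : v ∈ Cv := by intro s hs; rw [Set.mem_singleton_iff.1 hs]; exact hvv
  have hvA : v ∈ A := fun s hs => (hs v rfl).symm
  have hAC : A ≤ Cv := fun x hx s hs => by
    rw [Set.mem_singleton_iff.1 hs]; exact hx v hvC
  have hCom : ∀ a ∈ A, ∀ x ∈ Cv, W.Com a x := fun a ha x hx => (ha x hx).symm
  -- associativity
  have hassoc : ∀ a ∈ A, ∀ b ∈ A, ∀ x ∈ Cv,
      W.P (-1) (W.P (-1) a b) x = W.P (-1) a (W.P (-1) b x) := by
    intro a ha b hb x hx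
    rw [(hCom _ (cent_prod hX ha hb _) x hx).mul_comm, (hCom a ha x hx).symm.comm,
      (hCom b hb x hx).mul_comm]
  let G : Submodule ℂ[X] V :=
    { carrier := {g | g ∈ A ∧ (LinearMap.range (W.phi g c)).FG}
      zero_mem' := by
        refine ⟨A.zero_mem, ?_⟩
        have : W.phi 0 c = 0 := by ext; simp
        rw [this, LinearMap.range_zero]; exact Submodule.fg_bot
      add_mem' := by
        rintro a b ⟨ha, ha2⟩ ⟨hb, hb2⟩
        refine ⟨A.add_mem ha hb, ?_⟩
        refine (ha2.sup hb2).of_le ?_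
        rintro _ ⟨h, rfl⟩
        rw [phi_apply, smul_add, map_add]
        exact Submodule.add_mem_sup ⟨h, rfl⟩ ⟨h, rfl⟩
      smul_mem' := by
        rintro p a ⟨ha, ha2⟩
        refine ⟨A.smul_mem p ha, ?_⟩
        refine ha2.of_le ?_
        rintro _ ⟨h, rfl⟩
        refine ⟨h * p, ?_⟩
        simp [mul_smul] }
  have hGA : G ≤ A := fun x hx => hx.1
  have hvG : v ∈ G := ⟨hvA, hfg⟩
  have hGmul : ∀ a ∈ G, ∀ b ∈ G, W.P (-1) a b ∈ G := by
    rintro a ⟨ha, ha2⟩ b ⟨hb, hb2⟩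
    refine ⟨cent_prod hX ha hb _, ?_⟩
    obtain ⟨F1, hF1, h1⟩ := phi_compl _ ha2
    obtain ⟨F2, hF2, h2⟩ := phi_compl _ hb2
    let B : ℂ[X] →ₗ[ℂ] ℂ[X] →ₗ[ℂ] V :=
      LinearMap.mk₂ ℂ (fun p q => W.P (-1) (p • a) (W.P (-1) (q • b) c))
        (by intros; simp [add_smul]) (by intros; simp) (by intros; simp [add_smul]) (by intros; simp)
    refine (Submodule.FG.map₂ B hF1 hF2).of_le ?_
    rintro _ ⟨h, rfl⟩
    rw [phi_apply]
    apply smul_prod_mem hX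
    intro p q
    rw [hassoc _ (A.smul_mem p ha) _ (A.smul_mem q hb) c hcC]
    obtain ⟨p', hp', hp2⟩ := h1 p
    obtain ⟨q', hq', hq2⟩ := h2 q
    have e1 : W.P (-1) (q • b) c = W.P (-1) (q' • b) c := by
      simpa [sub_smul, sub_eq_zero] using hq2
    have e2 : W.P (-1) (p • a) c = W.P (-1) (p' • a) c := by
      simpa [sub_smul, sub_eq_zero] using hp2
    have hcm : ∀ p : ℂ[X], W.P (-1) (p • a) (W.P (-1) (q' • b) c)
        = W.P (-1) (q' • b) (W.P (-1) (p • a) c) := fun p =>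
      (hCom _ (A.smul_mem p ha) _ (hAC (A.smul_mem q' hb))).comm _ _ _
    rw [e1, hcm, e2, ← hcm]
    exact Submodule.apply_mem_map₂ B hp' hq'
  -- the finite dimensional space
  let U : Submodule ℂ V := (G.restrictScalars ℂ).map ((W.P (-1)).flip c)
  have hUfg : U.FG := by
    obtain ⟨s, hs⟩ := (IsNoetherian.noetherian G : G.FG)
    have hsG : ∀ g ∈ s, g ∈ G := fun g hg => by rw [← hs]; exact Submodule.subset_span hg
    have hfgs : (⨆ g ∈ s, LinearMap.range (W.phi g c)).FG :=
      Submodule.fg_biSup s _ (fun g hg => (hsG g hg).2)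
    refine hfgs.of_le ?_
    rintro _ ⟨g, hg, rfl⟩
    change g ∈ G at hg
    rw [← hs] at hg
    have : ∀ h : ℂ[X], W.P (-1) (h • g) c ∈ (⨆ g ∈ s, LinearMap.range (W.phi g c)) := by
      induction hg using Submodule.span_induction with
      | mem x hx =>
        intro h
        exact (le_biSup (fun g => LinearMap.range (W.phi g c)) hx) ⟨h, rfl⟩
      | zero => intro h; simp
      | add x y _ _ h1 h2 =>
        intro h
        rw [smul_add, map_add]
        exact Submodule.add_mem _ (h1 h) (h2 h)
      | smul p x _ h1 =>
        intro h
        rw [← mul_smul]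
        exact h1 _
    simpa using this 1
  have hUC : ∀ x ∈ U, x ∈ Cv := by
    rintro _ ⟨g, hg, rfl⟩
    exact cent_prod hX (hAC (hGA hg)) hcC _
  have hUne : U ≠ ⊥ := by
    intro h0
    have : W.Ort v c := by
      apply ort_of_neg hvc
      intro k
      have : W.P (-1) ((W.D ^ k) v) c ∈ U := by
        refine ⟨(W.D ^ k) v, ?_, rfl⟩
        rw [← pow_smul_D hX]
        exact G.smul_mem _ hvG
      rw [h0] at this
      simpa using this
    rcases hW.dom _ _ this with h | h
    · rw [h] at hDv; simp at hDv
    · exact hc h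
  have hUfd : FiniteDimensional ℂ U := Module.Finite.iff_fg.2 hUfg
  obtain ⟨c', hc'U, hc'0, hχ⟩ := common_eig ((fun g => W.P (-1) g) '' (G : Set V)) _ U hUfd le_rfl
    hUne
    (by
      rintro _ ⟨g, hg, rfl⟩ _ ⟨g', hg', rfl⟩
      refine ⟨W.P (-1) g g', hGmul _ hg _ hg', ?_⟩
      exact hassoc g (hGA hg) g' (hGA hg') c hcC)
    (by
      rintro _ ⟨g, hg, rfl⟩ _ ⟨g', hg', rfl⟩ x hx
      exact (hCom g (hGA hg) g' (hAC (hGA hg'))).comm _ _ _)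
  have hc'C := hUC c' hc'U
  have hχ' : ∀ g ∈ G, ∃ χ : ℂ, W.P (-1) g c' = χ • c' := fun g hg => hχ _ ⟨g, hg, rfl⟩
  have hex : ∃ n : ℤ, W.P n c' c' ≠ 0 := by
    by_contra hcon
    push Not at hcon
    rcases hW.dom _ _ hcon with h | h <;> exact hc'0 h
  obtain ⟨M, hM1, hM2⟩ := exists_max_mode c' c' hex
  have hkill : ∀ g ∈ G, W.P (-1) (W.D g) c' = 0 := by
    intro g hg
    have hDg : W.D g ∈ G := by rw [← hX]; exact G.smul_mem _ hg
    obtain ⟨χ, h1⟩ := hχ' g hg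
    obtain ⟨χ', h2⟩ := hχ' _ hDg
    have hgc := hCom g (hGA hg) c' hc'C
    have hDgc := hCom _ (hGA hDg) c' hc'C
    have e := top_identity hgc M hM2
    rw [h1, hgc.comm, h1, hDgc.comm, h2] at e
    simp only [map_smul, LinearMap.smul_apply] at e
    have e2 : χ' • W.P M c' c' = 0 := by simpa using e.symm
    rw [smul_eq_zero] at e2
    rw [h2, e2.resolve_right hM1, zero_smul]
  have hort : W.Ort (W.D v) c' := by
    apply ort_of_neg
    · apply Com.symm; apply Com.D; exact (hc'C v rfl).symm
    · intro k
      have e : (W.D ^ k) (W.D v) = W.D ((W.D ^ k) v) := by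
        rw [← Module.End.mul_apply, ← Module.End.mul_apply, ← pow_succ, ← pow_succ']
      rw [e]
      apply hkill
      rw [← pow_smul_D hX]
      exact G.smul_mem _ hvG
  rcases hW.dom _ _ hort with h | h
  · exact hDv h
  · exact hc'0 h

end VertexAlgebra
end Chunk4

section Chunk5
open Finset Polynomial

namespace VertexAlgebra

universe u
variable {V : Type u} [AddCommGroup V] [Module ℂ V] {W : VertexAlgebra V}

lemma top_pow {y b : V} {p : ℕ} (h : ∀ n : ℕ, p < n → W.P n y b = 0) (k : ℕ) :
    (∀ n : ℕ, p + k < n → W.P n y ((W.D ^ k) b) = 0) ∧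
      W.P ((p + k : ℕ) : ℤ) y ((W.D ^ k) b) = (((p + k).descFactorial k : ℕ) : ℂ) • W.P p y b := by
  induction k with
  | zero => simpa using h
  | succ k ih =>
    obtain ⟨h1, h2⟩ := ih
    refine ⟨fun n hn => ?_, ?_⟩
    · rw [pow_succ', Module.End.mul_apply, W.P_D, h1 n (by omega)]
      have := h1 (n - 1) (by omega)
      rw [show ((n - 1 : ℕ) : ℤ) = n - 1 by omega] at this
      rw [this]; simp
    · rw [pow_succ', Module.End.mul_apply, W.P_D, h1 _ (by omega)]
      rw [show ((p + (k + 1) : ℕ) : ℤ) - 1 = ((p + k : ℕ) : ℤ) by push_cast; ring, h2]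
      rw [map_zero, zero_add, smul_smul]
      congr 1
      rw [show p + (k + 1) = p + k + 1 by ring, Nat.succ_descFactorial_succ]
      push_cast; ring

variable [Module ℂ[X] V] [IsScalarTower ℂ ℂ[X] V]

lemma top_poly (hX : ∀ v : V, (X : ℂ[X]) • v = W.D v) {y b : V} {p : ℕ}
    (h : ∀ n : ℕ, p < n → W.P n y b = 0) (Q : ℕ) (q : ℂ[X]) (hq : q.natDegree ≤ Q) :
    W.P ((p + Q : ℕ) : ℤ) y (q • b)
      = (q.coeff Q * (((p + Q).descFactorial Q : ℕ) : ℂ)) • W.P p y b := by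
  rw [q.as_sum_range' (Q + 1) (by omega), sum_smul, map_sum, sum_range_succ, sum_eq_zero]
  · rw [← smul_X_eq_monomial, smul_assoc, pow_smul_D hX, map_smul, (top_pow h Q).2, zero_add]
    simp only [← smul_X_eq_monomial, finsetSum_coeff, coeff_smul, coeff_X_pow, mul_smul]
    simp
  · intro k hk
    rw [← smul_X_eq_monomial, smul_assoc, pow_smul_D hX, map_smul, (top_pow h k).1, smul_zero]
    rw [mem_range] at hk
    omega

lemma exists_li {E F : Type*} [AddCommGroup E] [Module ℂ E] [AddCommGroup F] [Module ℂ F]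
    (φ : E →ₗ[ℂ] F) (h : ¬ (LinearMap.range φ).FG) (n : ℕ) :
    ∃ g : Fin n → E, LinearIndependent ℂ (φ ∘ g) := by
  have hr : (n : Cardinal) ≤ Module.rank ℂ (LinearMap.range φ) := by
    by_contra hlt
    push Not at hlt
    apply h
    rw [← Module.Finite.iff_fg, ← Module.rank_lt_aleph0_iff]
    exact hlt.trans Cardinal.natCast_lt_aleph0
  obtain ⟨s, hs, hli⟩ := le_rank_iff_exists_linearIndependent_finset.1 hr
  let e : Fin n ≃ s := (Fintype.equivFinOfCardEq (by simpa using hs)).symm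
  choose g hg using fun i : Fin n => (e i : LinearMap.range φ).2
  refine ⟨g, ?_⟩
  have h1 := (hli.comp e e.injective).map' (LinearMap.range φ).subtype (by simp)
  have h2 : φ ∘ g = (LinearMap.range φ).subtype ∘ Subtype.val ∘ e := by
    ext i
    exact hg i
  rw [h2]
  exact h1

variable [Module.Finite ℂ[X] V]

lemma Good.lemR (hW : W.Good) {v y b : V} (hvv : W.Com v v) (hDv : W.D v ≠ 0)
    (h : ∀ j : ℕ, W.Com v (W.P j y b)) : W.Com y b := by
  by_contra hcon
  have hX := hW.hX
  have hex : ∃ n : ℕ, W.P n y b ≠ 0 := by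
    by_contra hc
    push Not at hc
    exact hcon hc
  obtain ⟨p, hp, hpmax⟩ : ∃ p : ℕ, W.P p y b ≠ 0 ∧ ∀ n : ℕ, p < n → W.P n y b = 0 := by
    obtain ⟨n, hn⟩ := hex
    obtain ⟨M, h1, h2⟩ := exists_max_mode y b ⟨n, hn⟩
    have : (n : ℤ) ≤ M := by
      by_contra hc
      exact hn (h2 n (by omega))
    obtain ⟨k, rfl⟩ := Int.eq_ofNat_of_zero_le (show 0 ≤ M by omega)
    exact ⟨k, h1, fun m hm => h2 m (by omega)⟩
  set c := W.P p y b with hc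
  have hvc : W.Com v c := h p
  obtain ⟨g, hg⟩ := exists_li _ (hW.lemF hvv hDv hp hvc) (Module.finrank ℂ[X] V + 1)
  -- choose I
  obtain ⟨I, hI⟩ : ∃ I : ℕ, ∀ i, ∀ n : ℕ, I ≤ n → W.P n y (g i • v) = 0 := by
    choose N hN using fun i => W.field_ax y (g i • v)
    exact ⟨univ.sup N, fun i n hn => hN i n (le_trans (le_sup (mem_univ i)) hn)⟩
  let Cv := W.cent hX {v}
  have hCv : ∀ x ∈ Cv, W.Com v x := fun x hx => hx v rfl
  have hvC : v ∈ Cv := by intro s hs; rw [Set.mem_singleton_iff.1 hs]; exact hvv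
  let bI := (W.D ^ I) b
  have hyu : ∀ j : ℕ, W.P j y bI ∈ Cv := by
    have : ∀ I j : ℕ, W.P j y ((W.D ^ I) b) ∈ Cv := by
      intro I
      induction I with
      | zero => intro j s hs; rw [Set.mem_singleton_iff.1 hs]; exact h j
      | succ I ih =>
        intro j
        rw [pow_succ', Module.End.mul_apply, W.P_D, ← hX]
        refine Cv.add_mem (Cv.smul_mem _ (ih j)) ?_
        cases j with
        | zero => simp
        | succ j =>
          rw [show ((j + 1 : ℕ) : ℤ) - 1 = (j : ℤ) by push_cast; ring]
          exact (Cv.restrictScalars ℂ).smul_mem _ (ih j)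
    exact this I
  let m : Fin (Module.finrank ℂ[X] V + 1) → V := fun i => W.P (-1) bI (g i • v)
  have hm : ∀ i, ∀ n : ℕ, p + I ≤ n → W.P n y (m i) = W.P (-1) (W.P n y bI) (g i • v) := by
    intro i n hn
    have hcomw : ∀ j : ℕ, W.Com (W.P j y bI) (g i • v) := by
      intro j
      have : g i • v ∈ W.cent hX {W.P j y bI} := by
        apply Submodule.smul_mem
        intro s hs
        rw [Set.mem_singleton_iff.1 hs]
        exact (hCv _ (hyu j)).symm
      exact this _ rfl
    simp only [m]
    rw [W.comm_nat, hI i n (by omega), map_zero, zero_add, sum_range_succ, sum_eq_zero]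
    · rw [zero_add, Nat.choose_self, Nat.cast_one, one_smul]
      congr 3
      ring
    · intro j hj
      rw [mem_range] at hj
      have := hcomw j (n - 1 - j)
      rw [show ((n - 1 - j : ℕ) : ℤ) = n + -1 - j by omega] at this
      rw [this, smul_zero]
  have hm1 : ∀ i, ∀ n : ℕ, p + I < n → W.P n y (m i) = 0 := by
    intro i n hn
    rw [hm i n (by omega), (top_pow hpmax I).1 n hn]; simp
  have hm2 : ∀ i, W.P ((p + I : ℕ) : ℤ) y (m i)
      = (((p + I).descFactorial I : ℕ) : ℂ) • W.phi v c (g i) := by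
    intro i
    rw [hm i _ le_rfl, (top_pow hpmax I).2, LinearMap.map_smul₂, phi_apply]
    congr 1
    apply Com.mul_comm
    have : g i • v ∈ W.cent hX {c} := by
      apply Submodule.smul_mem
      intro s hs
      rw [Set.mem_singleton_iff.1 hs]
      exact hvc.symm
    exact this _ rfl
  have hnli : ¬ LinearIndependent ℂ[X] m := by
    intro hli
    have := hli.fintype_card_le_finrank
    simp at this
  obtain ⟨q, hq0, i0, hi0⟩ := Fintype.not_linearIndependent_iff.1 hnli
  let Q := univ.sup (fun i => (q i).natDegree)
  have hQ : ∀ i, (q i).natDegree ≤ Q := fun i => le_sup (f := fun i => (q i).natDegree) (mem_univ i)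
  obtain ⟨i1, hi1⟩ : ∃ i, (q i).coeff Q ≠ 0 := by
    obtain ⟨i, hi, hiQ⟩ := exists_mem_eq_sup univ ⟨i0, mem_univ _⟩ (fun i => (q i).natDegree)
    by_cases hqi : q i = 0
    · have hQ0 : Q = 0 := by
        change univ.sup _ = 0
        rw [hiQ, hqi, natDegree_zero]
      refine ⟨i0, ?_⟩
      have := hQ i0
      rw [hQ0] at this ⊢
      obtain ⟨z, hz⟩ := natDegree_eq_zero.1 (Nat.le_zero.1 this)
      rw [← hz] at hi0 ⊢
      simpa using hi0
    · refine ⟨i, ?_⟩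
      have : Q = (q i).natDegree := hiQ
      rw [this]
      simpa using hqi
  have e := congrArg (W.P ((p + I + Q : ℕ) : ℤ) y) hq0
  rw [map_sum, map_zero] at e
  have e2 : ∑ i, ((q i).coeff Q * (((p + I + Q).descFactorial Q : ℕ) : ℂ) *
      (((p + I).descFactorial I : ℕ) : ℂ)) • (W.phi v c ∘ g) i = 0 := by
    rw [← e]
    apply sum_congr rfl
    intro i _
    rw [top_poly hX (hm1 i) Q (q i) (hQ i), hm2, smul_smul]; rfl
  have e3 := Fintype.linearIndependent_iff.1 hg _ e2 i1
  rw [mul_eq_zero, mul_eq_zero] at e3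
  rcases e3 with (e3 | e3) | e3
  · exact hi1 e3
  · have : (p + I + Q).descFactorial Q = 0 := by exact_mod_cast e3
    rw [Nat.descFactorial_eq_zero_iff_lt] at this; omega
  · have : (p + I).descFactorial I = 0 := by exact_mod_cast e3
    rw [Nat.descFactorial_eq_zero_iff_lt] at this; omega

end VertexAlgebra
end Chunk5

section Chunk6
open Finset Polynomial

namespace VertexAlgebra

section lin
variable {M : Type*} [AddCommGroup M] [Module ℂ M] [Module ℂ[X] M] [IsScalarTower ℂ ℂ[X] M]

lemma C_smul (c : ℂ) (x : M) : (C c : ℂ[X]) • x = c • x := by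
  rw [← algebraMap_smul ℂ[X] c x]; rfl

lemma poly_rel (f : Module.End ℂ[X] M) (E : M →ₗ[ℂ] M) (κ : ℂ) (hκ : κ ≠ 0)
    (hE : ∀ (q : ℂ[X]) (x : M), E (q • x) = q • E x + κ • (derivative q • f x))
    (hEf : ∀ x, E (f x) = f (E x)) (d : ℕ) :
    ∀ (c : ℕ → ℂ[X]) (L k : ℕ), (∀ i < L, (c i).natDegree ≤ d) → (∃ i < L, c i ≠ 0) →
    (∀ x, ∑ i ∈ range L, c i • (f ^ (i + k)) x = 0) → ∃ g : ℂ[X], g ≠ 0 ∧ aeval f g = 0 := by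
  induction d with
  | zero =>
    intro c L k hd ⟨i0, hi0, hc0⟩ hr
    choose! z hz using fun i hi => natDegree_eq_zero.1 (Nat.le_zero.1 (hd i hi))
    refine ⟨∑ i ∈ range L, C (z i) * X ^ (i + k), ?_, ?_⟩
    · intro h0
      have := congrArg (fun p => p.coeff (i0 + k)) h0
      simp only [finsetSum_coeff, coeff_C_mul, coeff_X_pow, coeff_zero, add_left_inj] at this
      simp only [mul_ite, mul_one, mul_zero, sum_ite_eq, mem_range, hi0, if_true] at this
      apply hc0
      rw [← hz i0 hi0, this, C_0]
    · ext x
      rw [map_sum, LinearMap.sum_apply, LinearMap.zero_apply, ← hr x]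
      apply sum_congr rfl
      intro i hi
      rw [← hz i (mem_range.1 hi), C_smul]
      simp
  | succ d ih =>
    intro c L k hd hc hr
    by_cases hall : ∀ i < L, (c i).natDegree = 0
    · exact ih c L k (fun i hi => by rw [hall i hi]; omega) hc hr
    push Not at hall
    obtain ⟨i1, hi1, hd1⟩ := hall
    refine ih (fun i => derivative (c i)) L (k + 1) ?_ ⟨i1, hi1, ?_⟩ ?_
    · intro i hi
      have := hd i hi
      have := natDegree_derivative_le (c i)
      omega
    · intro h0
      exact hd1 (derivative_eq_zero.1 h0)
    · intro x
      have hEp : ∀ n : ℕ, ∀ x, E ((f ^ n) x) = (f ^ n) (E x) := by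
        intro n
        induction n with
        | zero => intro x; simp
        | succ n ih => intro x; rw [pow_succ, Module.End.mul_apply, ih, hEf, ← Module.End.mul_apply]
      have e1 := congrArg E (hr x)
      rw [map_sum, map_zero] at e1
      simp only [hE, sum_add_distrib, hEp] at e1
      rw [hr (E x), zero_add, ← smul_sum, smul_eq_zero] at e1
      rw [← e1.resolve_left hκ]
      apply sum_congr rfl
      intro i _
      rw [← add_assoc, pow_succ', Module.End.mul_apply]

lemma nil_of_eig (f : Module.End ℂ[X] M) (hf : ∀ (w : M) (c : ℂ), w ≠ 0 → f w = c • w → c = 0)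
    (d : ℕ) : ∀ (g : ℂ[X]) (x : M), g.natDegree ≤ d → g ≠ 0 → (aeval f g) x = 0 →
      (f ^ d) x = 0 := by
  induction d with
  | zero =>
    intro g x hd h0 hx
    obtain ⟨c, rfl⟩ := natDegree_eq_zero.1 (Nat.le_zero.1 hd)
    rw [aeval_C] at hx
    change c • x = 0 at hx
    rw [smul_eq_zero] at hx
    rcases hx with hx | hx
    · simp [hx] at h0
    · simp [hx]
  | succ d ih =>
    intro h x hd h0 hx
    by_cases hd0 : h.natDegree = 0
    · rw [pow_succ', Module.End.mul_apply, ih h x (by omega) h0 hx, map_zero]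
    obtain ⟨α, hα⟩ := Complex.exists_root (f := h) (natDegree_pos_iff_degree_pos.1 (by omega))
    obtain ⟨g, rfl⟩ := dvd_iff_isRoot.2 hα
    have hg0 : g ≠ 0 := right_ne_zero_of_mul h0
    have hgd : g.natDegree ≤ d := by
      rw [natDegree_mul (left_ne_zero_of_mul h0) hg0, natDegree_X_sub_C] at hd
      omega
    by_cases ha : α = 0
    · subst ha
      rw [C_0, sub_zero, mul_comm, map_mul, Module.End.mul_apply, aeval_X] at hx
      rw [pow_succ, Module.End.mul_apply]
      exact ih g _ hgd hg0 hx
    · rw [pow_succ', Module.End.mul_apply, ih g x hgd hg0, map_zero]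
      by_contra hne
      apply ha
      apply hf _ α hne
      rw [map_mul, Module.End.mul_apply, map_sub, aeval_X, aeval_C, LinearMap.sub_apply,
        sub_eq_zero] at hx
      exact hx

lemma rank_tors [Module.Finite ℂ[X] M] (N1 N2 : Submodule ℂ[X] M) (hle : N1 ≤ N2)
    (hr : Module.finrank ℂ[X] N2 ≤ Module.finrank ℂ[X] N1) (y : M) (hy : y ∈ N2) :
    ∃ h : ℂ[X], h ≠ 0 ∧ h • y ∈ N1 := by
  let K := Submodule.comap N2.subtype N1
  have e : Module.finrank ℂ[X] K = Module.finrank ℂ[X] N1 :=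
    (Submodule.comapSubtypeEquivOfLe hle).finrank_eq
  have h1 := Submodule.finrank_quotient_add_finrank K
  have h2 : Module.finrank ℂ[X] (N2 ⧸ K) = 0 := by omega
  rw [Module.finrank_eq_zero_iff] at h2
  obtain ⟨h, h0, hy0⟩ := h2 (Submodule.Quotient.mk ⟨y, hy⟩)
  refine ⟨h, h0, ?_⟩
  rw [← Submodule.Quotient.mk_smul, Submodule.Quotient.mk_eq_zero] at hy0
  exact hy0

end lin

universe u
variable {V : Type u} [AddCommGroup V] [Module ℂ V] {W : VertexAlgebra V}
variable [Module ℂ[X] V] [IsScalarTower ℂ ℂ[X] V] [Module.Finite ℂ[X] V]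

lemma Good.D_poly (hW : W.Good) (L : V →ₗ[ℂ] V) (h : ∀ x, L (W.D x) = W.D (L x)) (q : ℂ[X])
    (x : V) : L (q • x) = q • L x := by
  induction q using Polynomial.induction_on' with
  | add p q hp hq => rw [add_smul, map_add, hp, hq, add_smul]
  | monomial n c =>
    rw [← smul_X_eq_monomial, smul_assoc, map_smul, smul_assoc]
    congr 1
    induction n with
    | zero => simp
    | succ n ih => rw [pow_succ', mul_smul, hW.hX, h, ih, mul_smul, hW.hX]

/-- An operator commuting with `D` as an `ℂ[X]`-linear map. -/
noncomputable def Good.toLin (hW : W.Good) (L : V →ₗ[ℂ] V) (h : ∀ x, L (W.D x) = W.D (L x)) :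
    V →ₗ[ℂ[X]] V where
  toFun := L
  map_add' := L.map_add
  map_smul' := fun q x => hW.D_poly L h q x

lemma P_nat_D_zero (n : ℕ) {v : V} (hv : ∀ j : ℕ, j < n → ∀ x, W.P j v x = 0) (x : V) :
    W.P n v (W.D x) = W.D (W.P n v x) := by
  rw [W.P_D]
  cases n with
  | zero => simp
  | succ n =>
    have := hv n (by omega) x
    rw [show ((n + 1 : ℕ) : ℤ) - 1 = (n : ℤ) by push_cast; ring, this]
    simp

lemma P_nat_der (n : ℕ) {v : V} (x y : V) (hv : ∀ j : ℕ, j < n → W.P j v x = 0) (m : ℤ) :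
    W.P n v (W.P m x y) = W.P m (W.P n v x) y + W.P m x (W.P n v y) := by
  rw [W.comm_nat, sum_range_succ, sum_eq_zero, zero_add, Nat.choose_self, Nat.cast_one, one_smul,
    add_comm]
  · congr 3
    lia
  · intro j hj
    rw [hv j (mem_range.1 hj)]; simp

lemma Good.nilp (hW : W.Good) (n : ℕ) {v : V} (hvv : W.Com v v)
    (hv : ∀ j : ℕ, j < n → ∀ x, W.P j v x = 0) : ∃ d : ℕ, ∀ x, ((W.P n v) ^ d) x = 0 := by
  let f : Module.End ℂ[X] V := hW.toLin (W.P n v) (P_nat_D_zero n hv)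
  have hf : ∀ x, f x = W.P n v x := fun x => rfl
  have hder : W.IsDer f := by
    intro m x y
    simp only [hf]
    exact P_nat_der n x y (fun j hj => hv j hj x) m
  have hED : ∀ x, W.P (n + 1 : ℕ) v (W.D x)
      = W.D (W.P (n + 1 : ℕ) v x) + ((n + 1 : ℕ) : ℂ) • f x := by
    intro x
    rw [W.P_D, hf]
    rw [show ((n + 1 : ℕ) : ℤ) - 1 = (n : ℤ) by push_cast; ring]
    norm_cast
  have hE : ∀ (q : ℂ[X]) (x : V), W.P (n + 1 : ℕ) v (q • x)
      = q • W.P (n + 1 : ℕ) v x + ((n + 1 : ℕ) : ℂ) • (derivative q • f x) := by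
    intro q x
    induction q using Polynomial.induction_on' with
    | add p q hp hq =>
      rw [add_smul, map_add, hp, hq, derivative_add, add_smul, add_smul, smul_add]; abel
    | monomial k c =>
      rw [← smul_X_eq_monomial, smul_assoc, map_smul, smul_assoc, derivative_smul, smul_assoc,
        smul_comm _ c, ← smul_add]
      congr 1
      induction k with
      | zero => simp
      | succ k ih =>
        rw [pow_succ, mul_comm, mul_smul, hW.hX, hED, ih, ← hW.hX, derivative_mul, map_smul]
        simp only [derivative_X, one_mul, smul_add, add_smul, mul_smul]
        rw [smul_comm (X : ℂ[X]) ((n + 1 : ℕ) : ℂ), smul_comm (X : ℂ[X]) (X ^ k : ℂ[X])]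
        abel
  obtain ⟨p, hp, hp0⟩ := LinearMap.exists_monic_and_aeval_eq_zero ℂ[X] f
  obtain ⟨g, hg0, hg⟩ := poly_rel f (W.P (n + 1 : ℕ) v) ((n + 1 : ℕ) : ℂ)
    (by exact_mod_cast Nat.succ_ne_zero n) hE (fun x => hvv.comm _ _ _)
    ((range (p.natDegree + 1)).sup (fun i => (p.coeff i).natDegree)) (fun i => p.coeff i)
    (p.natDegree + 1) 0
    (fun i hi => le_sup (f := fun i => (p.coeff i).natDegree) (mem_range.2 hi))
    ⟨p.natDegree, by omega, by simpa using hp.ne_zero⟩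
    (by
      intro x
      have := LinearMap.congr_fun hp0 x
      rw [aeval_eq_sum_range, LinearMap.sum_apply] at this
      simpa using this)
  refine ⟨g.natDegree, fun x => ?_⟩
  have h1 := nil_of_eig f (fun w c hw h => hW.der_eig hder hw h) g.natDegree g x le_rfl hg0
    (by rw [hg]; rfl)
  have h2 : ∀ k : ℕ, ∀ x, (f ^ k) x = ((W.P n v) ^ k) x := by
    intro k
    induction k with
    | zero => intro x; rfl
    | succ k ih => intro x; rw [pow_succ, Module.End.mul_apply, ih, pow_succ]; rfl
  rw [← h2, h1]

/-- Kernel of `D` as submodule. -/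
noncomputable def Good.kerD (hW : W.Good) : Submodule ℂ[X] V :=
  W.toH hW.hX (LinearMap.ker W.D) (fun x hx => by simp [LinearMap.mem_ker.1 hx])

lemma Good.mem_kerD (hW : W.Good) {x : V} : x ∈ hW.kerD ↔ W.D x = 0 := Iff.rfl

lemma Good.tors_kerD (hW : W.Good) {h : ℂ[X]} {x : V} (h0 : h ≠ 0) (hx : h • x ∈ hW.kerD) :
    x ∈ hW.kerD := by
  rw [hW.mem_kerD, ← hW.hX, ← mul_smul] at hx
  exact hW.tors (mul_ne_zero X_ne_zero h0) hx

/-- `{y : v_j y = 0, j < n}`. -/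
noncomputable def Good.S (hW : W.Good) (v : V) (n : ℕ) : Submodule ℂ[X] V :=
  W.toH hW.hX
    { carrier := {y | ∀ j : ℕ, j < n → W.P j v y = 0}
      add_mem' := fun ha hb j hj => by rw [map_add, ha j hj, hb j hj, add_zero]
      zero_mem' := fun j _ => map_zero _
      smul_mem' := fun c _ ha j hj => by rw [map_smul, ha j hj, smul_zero] }
    (by
      intro x hx j hj
      rw [W.P_D, hx j hj]
      cases j with
      | zero => simp
      | succ j =>
        have := hx j (by omega)
        rw [show ((j + 1 : ℕ) : ℤ) - 1 = (j : ℤ) by push_cast; ring, this]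
        simp)

lemma Good.mem_S (hW : W.Good) {v : V} {n : ℕ} {x : V} :
    x ∈ hW.S v n ↔ ∀ j : ℕ, j < n → W.P j v x = 0 := Iff.rfl

lemma Good.S_sub (hW : W.Good) (v : V) (n : ℕ) : W.IsSub (hW.S v n) where
  vac := fun j _ => W.creation_pos v j (by omega)
  prod := by
    intro m x hx y hy j hj
    rw [P_nat_der j x y (fun i hi => hx i (by omega)), hx j hj, hy j hj]
    simp

lemma Good.mod_tor (hW : W.Good) {v y : V} {j : ℕ} (h : ∀ i : ℕ, i < j → W.P i v y ∈ hW.kerD)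
    (q : ℂ[X]) : (∀ i : ℕ, i < j → W.P i v (q • y) ∈ hW.kerD) ∧
      W.P j v (q • y) - q • W.P j v y ∈ hW.kerD := by
  have hc : ∀ (c : ℂ) (x : V), x ∈ hW.kerD → c • x ∈ hW.kerD := fun c x hx =>
    (hW.kerD.restrictScalars ℂ).smul_mem c hx
  induction q using Polynomial.induction_on' with
  | add p q hp hq =>
    refine ⟨fun i hi => ?_, ?_⟩
    · rw [add_smul, map_add]; exact hW.kerD.add_mem (hp.1 i hi) (hq.1 i hi)
    · rw [add_smul, map_add, add_smul, add_sub_add_comm]; exact hW.kerD.add_mem hp.2 hq.2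
  | monomial n c =>
    suffices hs : (∀ i : ℕ, i < j → W.P i v ((X ^ n : ℂ[X]) • y) ∈ hW.kerD) ∧
      W.P j v ((X ^ n : ℂ[X]) • y) - (X ^ n : ℂ[X]) • W.P j v y ∈ hW.kerD by
      refine ⟨fun i hi => ?_, ?_⟩
      · rw [← smul_X_eq_monomial, smul_assoc, map_smul]; exact hc _ _ (hs.1 i hi)
      · rw [← smul_X_eq_monomial, smul_assoc, map_smul, smul_assoc, ← smul_sub]
        exact hc _ _ hs.2
    induction n with
    | zero => simpa using h
    | succ n ih =>
      obtain ⟨h1, h2⟩ := ih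
      refine ⟨fun i hi => ?_, ?_⟩
      · rw [pow_succ', mul_smul, hW.hX, W.P_D, ← hW.hX]
        refine hW.kerD.add_mem (hW.kerD.smul_mem _ (h1 i hi)) ?_
        cases i with
        | zero => simp
        | succ i =>
          rw [show ((i + 1 : ℕ) : ℤ) - 1 = (i : ℤ) by push_cast; ring]
          exact hc _ _ (h1 i (by omega))
      · rw [pow_succ', mul_smul, hW.hX, W.P_D, ← hW.hX, mul_smul, add_sub_right_comm, ← smul_sub]
        refine hW.kerD.add_mem (hW.kerD.smul_mem _ h2) ?_
        cases j with
        | zero => simp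
        | succ i =>
          rw [show ((i + 1 : ℕ) : ℤ) - 1 = (i : ℤ) by push_cast; ring]
          exact hc _ _ (h1 i (by omega))

lemma Good.S_stab (hW : W.Good) {v : V} (hvv : W.Com v v) (hDv : W.D v ≠ 0) :
    ∃ n, ∀ y ∈ hW.S v n, W.Com v y := by
  obtain ⟨_, ⟨n, rfl⟩, hmin⟩ := Nat.lt_wfRel.wf.has_min
    (Set.range fun n => Module.finrank ℂ[X] (hW.S v n)) ⟨_, 0, rfl⟩
  refine ⟨n, fun y hy => ?_⟩
  have hanti : ∀ m, n ≤ m → hW.S v m ≤ hW.S v n := fun m hm x hx j hj => hx j (by omega)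
  have htor : ∀ j : ℕ, W.P j v y ∈ hW.kerD := by
    intro j
    induction j using Nat.strong_induction_on with
    | _ j ih =>
      by_cases hj : j < n
      · rw [hy j hj]; exact hW.kerD.zero_mem
      obtain ⟨h, h0, hh⟩ := rank_tors (hW.S v (j + 1)) (hW.S v n) (hanti _ (by omega))
        (not_lt.1 (hmin _ ⟨j + 1, rfl⟩)) y hy
      have h2 := (hW.mod_tor ih h).2
      rw [hh j (by omega), zero_sub, Submodule.neg_mem_iff] at h2
      exact hW.tors_kerD h0 h2
  exact hW.lemR hvv hDv (fun j => (com_kerT (htor j) v).symm)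

lemma Good.beta (hW : W.Good) {v : V} (hvv : W.Com v v) (hDv : W.D v ≠ 0) (y : V) :
    W.Com v y := by
  by_contra hy
  have hex := hW.S_stab hvv hDv
  classical
  obtain ⟨n, hn1, hn2⟩ : ∃ n, (∃ y ∈ hW.S v n, ¬ W.Com v y) ∧ ∀ y ∈ hW.S v (n + 1), W.Com v y := by
    have hf := Nat.find_spec hex
    obtain ⟨n, hn⟩ : ∃ n, Nat.find hex = n + 1 := by
      apply Nat.exists_eq_succ_of_ne_zero
      intro h0
      rw [h0] at hf
      exact hy (hf y (fun j hj => by omega))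
    have hm := Nat.find_min hex (m := n) (by omega)
    rw [hn] at hf
    push Not at hm
    exact ⟨n, hm, hf⟩
  have hS := hW.S_sub v n
  have hvS : v ∈ hW.S v n := fun j _ => hvv j
  obtain ⟨d, hd⟩ := (hW.sub hS).nilp n (v := ⟨v, hvS⟩) (fun j => Subtype.ext (hvv j))
    (fun j hj x => Subtype.ext (x.2 j hj))
  have hpow : ∀ (k : ℕ) (x : hW.S v n), ((((W.sub hW.hX hS).P n ⟨v, hvS⟩) ^ k) x : V)
      = ((W.P n v) ^ k) x := by
    intro k
    induction k with
    | zero => intro x; rfl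
    | succ k ih => intro x; rw [pow_succ, Module.End.mul_apply, ih, pow_succ]; rfl
  obtain ⟨y0, hy0, hny0⟩ := hn1
  have hnil : ∃ k, ((W.P n v) ^ k) y0 = 0 := ⟨d, by
    have := congrArg Subtype.val (hd ⟨y0, hy0⟩)
    rw [hpow] at this
    exact this⟩
  have hmemS : ∀ k, ((W.P n v) ^ k) y0 ∈ hW.S v n := by
    intro k
    have := hpow k ⟨y0, hy0⟩
    rw [← this]
    exact Subtype.prop _
  have hf := Nat.find_spec hnil
  have hmin := fun m => Nat.find_min hnil (m := m)
  set k := Nat.find hnil with hk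
  have hnext : ∀ y ∈ hW.S v n, W.P n v y = 0 → y ∈ hW.S v (n + 1) := by
    intro y hy h j hj
    by_cases hjn : j = n
    · rw [hjn, h]
    · exact hy j (by omega)
  have hk2 : 2 ≤ k := by
    by_contra hlt
    have h1 : W.P n v y0 = 0 := by
      have : k = 0 ∨ k = 1 := by omega
      rcases this with h | h
      · rw [h] at hf; simp at hf; simp [hf]
      · rw [h] at hf; simpa using hf
    exact hny0 (hn2 y0 (hnext y0 hy0 h1))
  obtain ⟨l, hl⟩ : ∃ l, k = l + 2 := ⟨k - 2, by omega⟩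
  set y1 := ((W.P n v) ^ l) y0 with hy1
  have hy1S : y1 ∈ hW.S v n := hmemS l
  have e1 : ((W.P n v) ^ (l + 1)) y0 = W.P n v y1 := by
    rw [pow_succ', Module.End.mul_apply]
  have e2 : ((W.P n v) ^ (l + 2)) y0 = W.P n v (W.P n v y1) := by
    rw [pow_succ', Module.End.mul_apply, e1]
  have hne : W.P n v y1 ≠ 0 := by
    rw [← e1]; exact hmin (l + 1) (by omega)
  have hz : W.P n v (W.P n v y1) = 0 := by
    rw [← e2, ← hl]; exact hf
  have hC1 : W.Com v (W.P n v y1) := by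
    apply hn2
    apply hnext _ _ hz
    rw [← e1]; exact hmemS _
  have hcom : W.Com v y1 := by
    apply hW.lemR hvv hDv
    intro j
    apply hn2
    intro i hi
    rw [hvv.comm]
    by_cases hin : i = n
    · rw [hin, hC1 j]
    · rw [hy1S i (by omega), map_zero]
  exact hne (hcom n)

lemma Good.beta' (hW : W.Good) {v : V} (hvv : W.Com v v) (hDv : W.D v ≠ 0) (x y : V) :
    W.Com x y :=
  hW.lemR hvv hDv (fun _ => hW.beta hvv hDv _)

end VertexAlgebra
end Chunk6

section Chunk7
open Finset Polynomial

namespace VertexAlgebra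

section linE
variable {M : Type*} [AddCommGroup M] [Module ℂ M] [Module ℂ[X] M] [IsScalarTower ℂ ℂ[X] M]

lemma exists_eig (f : Module.End ℂ[X] M) (g : ℂ[X]) (x : M) (h0 : g ≠ 0) (hx0 : x ≠ 0)
    (hx : (aeval f g) x = 0) : ∃ (c : ℂ) (w : M), w ≠ 0 ∧ f w = c • w := by
  by_contra hne
  push Not at hne
  have h1 := nil_of_eig f (fun w c hw h => absurd h (hne c w hw)) g.natDegree g x le_rfl h0 hx
  have h2 : ∀ k : ℕ, (f ^ k) x ≠ 0 := by
    intro k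
    induction k with
    | zero => simpa using hx0
    | succ k ih =>
      rw [pow_succ', Module.End.mul_apply]
      intro h
      exact hne 0 _ ih (by rw [h, zero_smul])
  exact h2 _ h1

/-- The substitution `X ↦ X + μ`, `s ↦ s - β`. -/
noncomputable def tau (μ β : ℂ) : ℂ[X][X] ≃+* ℂ[X][X] :=
  (mapEquiv (taylorEquiv μ).toRingEquiv).trans (taylorEquiv (C (-β))).toRingEquiv

lemma tau_C (μ β : ℂ) (a : ℂ[X]) : tau μ β (C a) = C (taylor μ a) := by
  simp [tau]
  change taylor (-C β) (C (taylor μ a)) = _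
  rw [taylor_C]

lemma tau_X (μ β : ℂ) : tau μ β X = X - C (C β) := by
  simp [tau, sub_eq_add_neg]
  change taylor (-C β) X = _
  rw [taylor_X]; simp

lemma tau_tau (μ β μ' β' : ℂ) (q : ℂ[X][X]) : tau μ β (tau μ' β' q) = tau (μ + μ') (β + β') q := by
  induction q using Polynomial.induction_on' with
  | add p q hp hq => simp only [map_add, hp, hq]
  | monomial n a =>
    rw [← C_mul_X_pow_eq_monomial]
    simp only [map_mul, map_pow, tau_C, tau_X, map_sub, taylor_taylor]
    rw [taylor_C, C_add, C_add]
    congr 2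
    ring

lemma tau_zero (q : ℂ[X][X]) : tau 0 0 q = q := by
  induction q using Polynomial.induction_on' with
  | add p q hp hq => simp only [map_add, hp, hq]
  | monomial n a =>
    rw [← C_mul_X_pow_eq_monomial]
    simp only [map_mul, map_pow, tau_C, tau_X, taylor_zero]
    simp

lemma tau_period {δ v : ℂ} (hδ : δ ≠ 0) {c : ℂ[X]} (h : taylor δ c = C v * c) :
    c.natDegree = 0 := by
  by_contra hd
  obtain ⟨a, ha⟩ := Complex.exists_root (f := c) (natDegree_pos_iff_degree_pos.1 (by omega))
  have hn : ∀ n : ℕ, c.eval (a + n * δ) = 0 := by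
    intro n
    induction n with
    | zero => simpa using ha
    | succ n ih =>
      have := congrArg (eval (a + n * δ)) h
      rw [taylor_eval, eval_mul, ih, mul_zero] at this
      rw [← this]; congr 1; push_cast; ring
  have h0 : c = 0 := by
    apply eq_zero_of_infinite_isRoot
    refine Set.infinite_of_injective_forall_mem (f := fun n : ℕ => a + n * δ) ?_ hn
    intro m n hmn
    simpa [hδ] using hmn
  simp [h0] at hd

lemma exists_irr (f : Module.End ℂ[X] M) (P : ℂ[X][X]) : P ≠ 0 → ∀ w : M, w ≠ 0 →
    (aeval f P) w = 0 → ∃ q : ℂ[X][X], Irreducible q ∧ q ∣ P ∧ ∃ A : ℂ[X][X], (aeval f A) w ≠ 0 ∧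
      (aeval f q) ((aeval f A) w) = 0 := by
  refine WfDvdMonoid.induction_on_irreducible (motive := fun P => P ≠ 0 → ∀ w : M, w ≠ 0 →
    (aeval f P) w = 0 → ∃ q : ℂ[X][X], Irreducible q ∧ q ∣ P ∧ ∃ A : ℂ[X][X], (aeval f A) w ≠ 0 ∧
      (aeval f q) ((aeval f A) w) = 0) P ?_ ?_ ?_
  · intro h; exact absurd rfl h
  · rintro u ⟨u, rfl⟩ _ w hw h
    exfalso
    apply hw
    have : (aeval f (((u⁻¹ : ℂ[X][X]ˣ) : ℂ[X][X]) * (u : ℂ[X][X]))) w = 0 := by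
      rw [map_mul, Module.End.mul_apply, h, map_zero]
    rw [Units.inv_mul, map_one] at this
    exact this
  · intro a i ha hi ih _ w hw h
    by_cases h1 : (aeval f a) w = 0
    · obtain ⟨q, hq, hd, A, h2, h3⟩ := ih ha w hw h1
      exact ⟨q, hq, hd.mul_left i, A, h2, h3⟩
    · refine ⟨i, hi, dvd_mul_right _ _, a, h1, ?_⟩
      rw [← Module.End.mul_apply, ← map_mul, h]

lemma irr_dvd (htf : ∀ (h : ℂ[X]) (x : M), h ≠ 0 → h • x = 0 → x = 0)
    (f : Module.End ℂ[X] M) {q Q : ℂ[X][X]} (hq : Irreducible q) {w : M} (hw : w ≠ 0)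
    (h1 : (aeval f q) w = 0) (h2 : (aeval f Q) w = 0) : q ∣ Q := by
  by_cases hd : q.natDegree = 0
  · obtain ⟨c, rfl⟩ := natDegree_eq_zero.1 hd
    rw [aeval_C] at h1
    exact absurd (htf c w (by rintro rfl; simp at hq) h1) hw
  have hp := hq.isPrimitive hd
  have hK := (hp.irreducible_iff_irreducible_map_fraction_map (K := FractionRing ℂ[X])).1 hq
  rcases (EuclideanDomain.dvd_or_coprime _ (Q.map (algebraMap ℂ[X] (FractionRing ℂ[X]))) hK) with h | h
  · exact hp.dvd_of_fraction_map_dvd_fraction_map h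
  exfalso
  obtain ⟨a, b, hab⟩ := h
  obtain ⟨s, hs⟩ := IsLocalization.exist_integer_multiples_of_finset (nonZeroDivisors ℂ[X])
    (a.coeffs ∪ b.coeffs)
  have key : ∀ p : (FractionRing ℂ[X])[X], p.coeffs ⊆ a.coeffs ∪ b.coeffs →
      ∃ p' : ℂ[X][X], p'.map (algebraMap ℂ[X] (FractionRing ℂ[X])) = C (algebraMap ℂ[X] (FractionRing ℂ[X]) s) * p := by
    intro p hp
    have : C (algebraMap ℂ[X] (FractionRing ℂ[X]) s) * p ∈ Polynomial.lifts (algebraMap ℂ[X] (FractionRing ℂ[X])) := by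
      rw [lifts_iff_coeff_lifts]
      intro n
      rw [coeff_C_mul]
      by_cases h0 : p.coeff n = 0
      · rw [h0, mul_zero]; exact ⟨0, map_zero _⟩
      · obtain ⟨z, hz⟩ := hs _ (hp (coeff_mem_coeffs h0))
        exact ⟨z, by rw [hz, Algebra.smul_def]⟩
    exact (mem_lifts _).1 this
  obtain ⟨a', ha'⟩ := key a subset_union_left
  obtain ⟨b', hb'⟩ := key b subset_union_right
  have hfin : a' * q + b' * Q = C (s : ℂ[X]) := by
    apply map_injective (algebraMap ℂ[X] (FractionRing ℂ[X])) (IsFractionRing.injective _ _)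
    rw [Polynomial.map_add, Polynomial.map_mul, Polynomial.map_mul, ha', hb', map_C, mul_assoc,
      mul_assoc, ← mul_add, hab, mul_one]
  have h3 : (aeval f (C (s : ℂ[X]))) w = 0 := by
    rw [← hfin, map_add, map_mul, map_mul, LinearMap.add_apply, Module.End.mul_apply,
      Module.End.mul_apply, h1, h2]; simp
  rw [aeval_C] at h3
  exact hw (htf _ w (nonZeroDivisors.ne_zero s.2) h3)

lemma period_eig (f : Module.End ℂ[X] M) {q : ℂ[X][X]} (hq : q ≠ 0) {δ ε : ℂ} (hδ : δ ≠ 0)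
    (h : Associated q (tau δ ε q)) {w : M} (hw : w ≠ 0) (h1 : (aeval f q) w = 0) :
    ∃ (d c : ℂ) (w : M), w ≠ 0 ∧ f w = (C d * X : ℂ[X]) • w + c • w := by
  obtain ⟨u, hu⟩ := h
  obtain ⟨u1, hu1, hu2⟩ := Polynomial.isUnit_iff.1 u.isUnit
  obtain ⟨u0, -, rfl⟩ := Polynomial.isUnit_iff.1 hu1
  let d : ℂ := -ε / δ
  let t : ℂ[X] := C d * X
  let r : ℂ[X][X] := taylor t q
  have hr : r.map (taylorEquiv δ).toRingEquiv.toRingHom = C (C u0) * r := by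
    have e : ∀ q : ℂ[X][X], (taylor t q).map (taylorEquiv δ).toRingEquiv.toRingHom
        = taylor t (tau δ ε q) := by
      intro q
      induction q using Polynomial.induction_on' with
      | add p q hp hq => simp only [map_add, Polynomial.map_add, hp, hq]
      | monomial n a =>
        rw [← C_mul_X_pow_eq_monomial]
        simp only [map_mul, map_pow, tau_C, tau_X, map_sub, taylor_mul, taylor_pow, taylor_C,
          taylor_X, Polynomial.map_mul, Polynomial.map_pow, Polynomial.map_add, map_C, map_X]
        congr 2
        have : (taylorEquiv δ).toRingEquiv.toRingHom t = t + C (-ε) := by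
          simp only [t, d]
          change taylor δ _ = _
          rw [taylor_mul, taylor_C, taylor_X, mul_add, ← C_mul, div_mul_cancel₀ _ hδ]
        rw [this]
        simp
        ring
    rw [e, ← hu, ← hu2, taylor_mul, taylor_C, mul_comm]
  have hc : ∀ i, ∃ z : ℂ, C z = r.coeff i := by
    intro i
    apply natDegree_eq_zero.1
    apply tau_period hδ (v := u0)
    have := congrArg (fun p => p.coeff i) hr
    simp only [coeff_map, coeff_C_mul] at this
    exact this
  have hlift : r ∈ Polynomial.lifts (C : ℂ →+* ℂ[X]) := by
    rw [lifts_iff_coeff_lifts]; exact hc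
  obtain ⟨r0, hr0⟩ := (mem_lifts _).1 hlift
  have hrne : r0 ≠ 0 := by
    rintro rfl
    rw [Polynomial.map_zero] at hr0
    apply hq
    apply taylor_injective t
    rw [map_zero]; exact hr0.symm
  let g : Module.End ℂ[X] M := f - algebraMap ℂ[X] _ t
  have hg : aeval g r0 = aeval f q := by
    have e1 : aeval g r0 = aeval g r := by
      rw [← hr0]
      exact (aeval_map_algebraMap ℂ[X] g r0).symm
    rw [e1]
    simp only [r]
    rw [taylor_apply, aeval_comp]
    congr 1
    simp [g]
  obtain ⟨c, w', hw', hc'⟩ := exists_eig g r0 w hrne hw (by rw [hg, h1])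
  refine ⟨d, c, w', hw', ?_⟩
  have : f w' - t • w' = c • w' := hc'
  rw [← this]; simp [t]

variable {M1 : Type*} [AddCommGroup M1] [Module ℂ M1] [Module ℂ[X] M1] [IsScalarTower ℂ ℂ[X] M1]

lemma shift_smul (φ : M1 →ₗ[ℂ] M) (μ : ℂ) (hφ : ∀ m, φ ((X : ℂ[X]) • m) = (X + C μ : ℂ[X]) • φ m)
    (q : ℂ[X]) (m : M1) : φ (q • m) = taylor μ q • φ m := by
  induction q using Polynomial.induction_on' generalizing m with
  | add p q hp hq => rw [add_smul, map_add, hp, hq, map_add, add_smul]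
  | monomial n c =>
    rw [← C_mul_X_pow_eq_monomial, mul_smul, C_smul, map_smul, taylor_mul, taylor_C, mul_smul,
      C_smul]
    congr 1
    induction n generalizing m with
    | zero => simp
    | succ n ih =>
      rw [pow_succ, mul_smul, ih, hφ, taylor_mul, mul_smul, taylor_X]

lemma shift_aeval (f1 : Module.End ℂ[X] M1) (f : Module.End ℂ[X] M) (φ : M1 →ₗ[ℂ] M) (μ β : ℂ)
    (hφ : ∀ m, φ ((X : ℂ[X]) • m) = (X + C μ : ℂ[X]) • φ m)
    (hf : ∀ m, φ (f1 m) = f (φ m) - β • φ m) (P : ℂ[X][X]) (m : M1) :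
    φ ((aeval f1 P) m) = (aeval f (tau μ β P)) (φ m) := by
  induction P using Polynomial.induction_on' generalizing m with
  | add p q hp hq => simp only [map_add, LinearMap.add_apply, hp, hq]
  | monomial n a =>
    rw [← C_mul_X_pow_eq_monomial]
    simp only [map_mul, map_pow, tau_C, tau_X, Module.End.mul_apply, aeval_C, aeval_X]
    change φ (a • _) = taylor μ a • _
    rw [shift_smul φ μ hφ]
    congr 1
    induction n generalizing m with
    | zero => simp
    | succ n ih =>
      rw [pow_succ, Module.End.mul_apply, ih, pow_succ, Module.End.mul_apply, hf]
      congr 1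
      simp only [map_sub, aeval_X, aeval_C, LinearMap.sub_apply]
      congr 2
      exact (C_smul β (φ m)).symm

theorem lemE [Module.Finite ℂ[X] M] [Module.Finite ℂ[X] M1]
    (htf : ∀ (h : ℂ[X]) (x : M), h ≠ 0 → h • x = 0 → x = 0)
    (f1 : Module.End ℂ[X] M1) (f : Module.End ℂ[X] M) (S : Set ℂ) (hS : S.Infinite)
    (h : ∀ μ ∈ S, ∃ (β : ℂ) (φ : M1 →ₗ[ℂ] M), (∃ m, φ m ≠ 0) ∧
      (∀ m, φ ((X : ℂ[X]) • m) = (X + C μ : ℂ[X]) • φ m) ∧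
      (∀ m, φ (f1 m) = f (φ m) - β • φ m)) :
    ∃ (d c : ℂ) (w : M), w ≠ 0 ∧ f w = (C d * X : ℂ[X]) • w + c • w := by
  classical
  obtain ⟨P1, hm1, hP1⟩ := LinearMap.exists_monic_and_aeval_eq_zero ℂ[X] f1
  obtain ⟨P2, hm2, hP2⟩ := LinearMap.exists_monic_and_aeval_eq_zero ℂ[X] f
  have main : ∀ μ : S, ∃ (β : ℂ) (q : (UniqueFactorizationMonoid.factors P2).toFinset)
      (b : (UniqueFactorizationMonoid.factors P1).toFinset),
      (∃ w : M, w ≠ 0 ∧ (aeval f q.1) w = 0) ∧ Associated (tau μ β b.1) q.1 := by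
    rintro ⟨μ, hμ⟩
    obtain ⟨β, φ, ⟨m, hm⟩, hφ, hf⟩ := h μ hμ
    obtain ⟨q, hq, hqP, A, hA, hqA⟩ := exists_irr f P2 hm2.ne_zero (φ m) hm (by rw [hP2]; rfl)
    have hd : q ∣ tau μ β P1 := by
      refine irr_dvd htf f hq hA hqA ?_
      rw [← Module.End.mul_apply, ← map_mul, mul_comm, map_mul, Module.End.mul_apply,
        ← shift_aeval f1 f φ μ β hφ hf, hP1]
      simp
    obtain ⟨q', hq', haq⟩ := UniqueFactorizationMonoid.exists_mem_factors_of_dvd hm2.ne_zero hq hqP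
    have hq2 : Irreducible ((tau μ β).symm q) :=
      (MulEquiv.irreducible_iff (tau μ β).symm).2 hq
    have hd2 : (tau μ β).symm q ∣ P1 := by
      have := map_dvd (tau μ β).symm hd
      rwa [RingEquiv.symm_apply_apply] at this
    obtain ⟨b, hb, hab⟩ := UniqueFactorizationMonoid.exists_mem_factors_of_dvd hm1.ne_zero hq2 hd2
    refine ⟨β, ⟨q', Multiset.mem_toFinset.2 hq'⟩, ⟨b, Multiset.mem_toFinset.2 hb⟩,
      ⟨(aeval f A) (φ m), hA, ?_⟩, ?_⟩
    · obtain ⟨u, hu⟩ := haq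
      change (aeval f q') _ = 0
      rw [← hu, mul_comm, map_mul, Module.End.mul_apply, hqA, map_zero]
    · have := hab.map (tau μ β)
      rw [RingEquiv.apply_symm_apply] at this
      exact this.symm.trans haq
  choose β q b hw hass using main
  have : Infinite S := hS.to_subtype
  obtain ⟨μ1, μ2, hne, heq⟩ := Finite.exists_ne_map_eq_of_infinite (fun μ => (q μ, b μ))
  simp only [Prod.mk.injEq] at heq
  obtain ⟨hq, hb⟩ := heq
  obtain ⟨w, hw0, hw1⟩ := hw μ1
  have hqm := (q μ1).2
  rw [Multiset.mem_toFinset] at hqm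
  refine period_eig f (UniqueFactorizationMonoid.irreducible_of_factor _ hqm).ne_zero
    (δ := (μ2 : ℂ) - μ1) (ε := β μ2 - β μ1) ?_ ?_ hw0 hw1
  · rw [sub_ne_zero]; intro h; exact hne (Subtype.ext h.symm)
  · have h1 := hass μ1
    have h2 := hass μ2
    rw [← hb, ← hq] at h2
    refine h2.symm.trans ?_
    have h3 := h1.map (tau ((μ2 : ℂ) - μ1) (β μ2 - β μ1))
    rw [tau_tau] at h3
    simpa using h3

end linE

end VertexAlgebra
end Chunk7

section Chunk8
open Finset Polynomial

namespace VertexAlgebra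

universe u
section lamdef
variable {V : Type u} [AddCommGroup V] [Module ℂ V] (W : VertexAlgebra V)

/-- The evaluated `λ`-product, on elements. -/
noncomputable def lamF (μ : ℂ) (x y : V) : V :=
  ∑ᶠ j : ℕ, (μ ^ j / (j.factorial : ℂ)) • W.P j x y

lemma lamF_eq (μ : ℂ) (x y : V) (N : ℕ) (hN : ∀ j : ℕ, N ≤ j → W.P j x y = 0) :
    W.lamF μ x y = ∑ j ∈ range N, (μ ^ j / (j.factorial : ℂ)) • W.P j x y := by
  apply finsum_eq_sum_of_support_subset
  intro j hj
  by_contra h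
  simp only [coe_range, Set.mem_Iio, not_lt] at h
  exact hj (by simp [hN j h])

lemma lamF_add (μ : ℂ) (x y z : V) : W.lamF μ x (y + z) = W.lamF μ x y + W.lamF μ x z := by
  obtain ⟨N, hN⟩ := W.field_ax x y
  obtain ⟨N', hN'⟩ := W.field_ax x z
  rw [W.lamF_eq μ x y (N + N') (fun j hj => hN j (by omega)),
    W.lamF_eq μ x z (N + N') (fun j hj => hN' j (by omega)),
    W.lamF_eq μ x (y + z) (N + N') (fun j hj => by
      rw [map_add, hN j (by omega), hN' j (by omega), add_zero]), ← sum_add_distrib]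
  simp

lemma lamF_add_left (μ : ℂ) (x y z : V) : W.lamF μ (x + y) z = W.lamF μ x z + W.lamF μ y z := by
  obtain ⟨N, hN⟩ := W.field_ax x z
  obtain ⟨N', hN'⟩ := W.field_ax y z
  rw [W.lamF_eq μ x z (N + N') (fun j hj => hN j (by omega)),
    W.lamF_eq μ y z (N + N') (fun j hj => hN' j (by omega)),
    W.lamF_eq μ (x + y) z (N + N') (fun j hj => by
      rw [map_add, LinearMap.add_apply, hN j (by omega), hN' j (by omega), add_zero]),
      ← sum_add_distrib]
  simp

lemma lamF_smul (μ c : ℂ) (x y : V) : W.lamF μ x (c • y) = c • W.lamF μ x y := by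
  obtain ⟨N, hN⟩ := W.field_ax x y
  rw [W.lamF_eq μ x y N hN,
    W.lamF_eq μ x (c • y) N (fun j hj => by rw [map_smul, hN j hj, smul_zero]), smul_sum]
  apply sum_congr rfl
  intro j _
  rw [map_smul, smul_comm]

lemma lamF_smul_left (μ c : ℂ) (x y : V) : W.lamF μ (c • x) y = c • W.lamF μ x y := by
  obtain ⟨N, hN⟩ := W.field_ax x y
  rw [W.lamF_eq μ x y N hN,
    W.lamF_eq μ (c • x) y N (fun j hj => by
      rw [map_smul, LinearMap.smul_apply, hN j hj, smul_zero]), smul_sum]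
  apply sum_congr rfl
  intro j _
  rw [map_smul, LinearMap.smul_apply, smul_comm]

/-- The evaluated `λ`-product. -/
noncomputable def lam (μ : ℂ) : V →ₗ[ℂ] V →ₗ[ℂ] V :=
  LinearMap.mk₂ ℂ (W.lamF μ) (fun x y z => W.lamF_add_left μ x y z)
    (fun c x y => W.lamF_smul_left μ c x y) (fun x y z => W.lamF_add μ x y z)
    (fun c x y => W.lamF_smul μ c x y)

lemma lam_eq (μ : ℂ) (x y : V) (N : ℕ) (hN : ∀ j : ℕ, N ≤ j → W.P j x y = 0) :
    W.lam μ x y = ∑ j ∈ range N, (μ ^ j / (j.factorial : ℂ)) • W.P j x y :=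
  W.lamF_eq μ x y N hN

lemma lam_D_left (μ : ℂ) (x y : V) : W.lam μ (W.D x) y = (-μ) • W.lam μ x y := by
  obtain ⟨N, hN⟩ := W.field_ax x y
  rw [W.lam_eq μ x y N hN, W.lam_eq μ (W.D x) y (N + 1), sum_range_succ', smul_sum]
  · rw [W.transl_inv]
    simp only [CharP.cast_eq_zero, Int.cast_zero, neg_zero, zero_smul, smul_zero, add_zero]
    apply sum_congr rfl
    intro j _
    rw [W.transl_inv, show ((j + 1 : ℕ) : ℤ) - 1 = (j : ℤ) by push_cast; ring, smul_smul, smul_smul]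
    congr 1
    rw [Nat.factorial_succ]
    have h1 : ((j : ℂ) + 1) ≠ 0 := by exact_mod_cast Nat.succ_ne_zero j
    have h2 : ((j.factorial : ℕ) : ℂ) ≠ 0 := by exact_mod_cast Nat.factorial_ne_zero j
    push_cast
    field_simp
    ring
  · intro j hj
    obtain ⟨i, rfl⟩ : ∃ i, j = i + 1 := ⟨j - 1, by omega⟩
    rw [W.transl_inv, show ((i + 1 : ℕ) : ℤ) - 1 = (i : ℤ) by push_cast; ring, hN i (by omega),
      smul_zero]

lemma D_lam (μ : ℂ) (x y : V) : W.D (W.lam μ x y) = W.lam μ (W.D x) y + W.lam μ x (W.D y) := by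
  obtain ⟨N, hN⟩ := W.field_ax x y
  obtain ⟨N1, hN1⟩ := W.field_ax (W.D x) y
  obtain ⟨N2, hN2⟩ := W.field_ax x (W.D y)
  rw [W.lam_eq μ x y (N + N1 + N2) (fun j hj => hN j (by omega)),
    W.lam_eq μ (W.D x) y (N + N1 + N2) (fun j hj => hN1 j (by omega)),
    W.lam_eq μ x (W.D y) (N + N1 + N2) (fun j hj => hN2 j (by omega)), ← sum_add_distrib, map_sum]
  apply sum_congr rfl
  intro j _
  rw [map_smul, W.D_deriv, smul_add]

lemma lam_D (μ : ℂ) (x y : V) : W.lam μ x (W.D y) = W.D (W.lam μ x y) + μ • W.lam μ x y := by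
  rw [D_lam, lam_D_left]; module

variable {W}
lemma lam_der [Module ℂ[X] V] [IsScalarTower ℂ ℂ[X] V] {f : V →ₗ[ℂ[X]] V} (hf : W.IsDer f)
    (μ : ℂ) (x y : V) :
    f (W.lam μ x y) = W.lam μ (f x) y + W.lam μ x (f y) := by
  obtain ⟨N, hN⟩ := W.field_ax x y
  obtain ⟨N1, hN1⟩ := W.field_ax (f x) y
  obtain ⟨N2, hN2⟩ := W.field_ax x (f y)
  rw [W.lam_eq μ x y (N + N1 + N2) (fun j hj => hN j (by omega)),
    W.lam_eq μ (f x) y (N + N1 + N2) (fun j hj => hN1 j (by omega)),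
    W.lam_eq μ x (f y) (N + N1 + N2) (fun j hj => hN2 j (by omega)), ← sum_add_distrib, map_sum]
  apply sum_congr rfl
  intro j _
  rw [LinearMap.map_smul_of_tower, hf, smul_add]

end lamdef

variable {V : Type u} [AddCommGroup V] [Module ℂ V] {W : VertexAlgebra V}
variable [Module ℂ[X] V] [IsScalarTower ℂ ℂ[X] V] [Module.Finite ℂ[X] V]

lemma Good.lemN (hW : W.Good) {f : V →ₗ[ℂ[X]] V} (hf : W.IsDer f) {w : V}
    (h1 : f (f w) = 0) (h2 : W.D (f w) = 0) : f w = 0 := by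
  by_contra hne
  set τ := f w with hτ
  have hvac0 : W.vac ≠ 0 := by
    intro h
    apply hne
    rw [← W.creation τ, h, map_zero]
  have hfvac : f W.vac = 0 := by
    have := hf (-1) W.vac W.vac
    rw [W.vac_field, W.creation, W.vac_field] at this
    simpa using this
  let u : ℕ → V := fun n => ((W.P (-1) w) ^ n) W.vac
  let t : ℕ → V := fun n => ((W.P (-1) τ) ^ n) W.vac
  have hu : ∀ n, u (n + 1) = W.P (-1) w (u n) := by
    intro n; simp only [u]; rw [pow_succ', Module.End.mul_apply]
  have ht : ∀ n, t (n + 1) = W.P (-1) τ (t n) := by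
    intro n; simp only [t]; rw [pow_succ', Module.End.mul_apply]
  have hft : ∀ x, f (W.P (-1) τ x) = W.P (-1) τ (f x) := by
    intro x; rw [hf, h1]; simp
  have hfu : ∀ n, f (u (n + 1)) = ((n + 1 : ℕ) : ℂ) • W.P (-1) τ (u n) := by
    intro n
    induction n with
    | zero => rw [hu, hf]; simp [u, hfvac, ← hτ]
    | succ n ih =>
      rw [hu, hf, ih, map_smul, ← (com_kerT h2 w).comm (-1) (-1), ← hu]
      push_cast
      module
  have hpt : ∀ (k : ℕ) (x : V), (f ^ k) (W.P (-1) τ x) = W.P (-1) τ ((f ^ k) x) := by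
    intro k
    induction k with
    | zero => intro x; rfl
    | succ k ih => intro x; rw [pow_succ, Module.End.mul_apply, hft, ih]; rfl
  have hmain : ∀ n : ℕ, (f ^ n) (u n) = (n.factorial : ℂ) • t n := by
    intro n
    induction n with
    | zero => simp [u, t]
    | succ n ih =>
      rw [pow_succ, Module.End.mul_apply, hfu, LinearMap.map_smul_of_tower, hpt, ih, map_smul, ht,
        smul_smul, Nat.factorial_succ]
      push_cast; rfl
  have htne : ∀ n, t n ≠ 0 := by
    intro n
    induction n with
    | zero => simpa [t] using hvac0
    | succ n ih =>
      rw [ht]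
      intro h
      rcases hW.dom.mul_ne h2 h with h | h
      · exact hne h
      · exact ih h
  have hft0 : ∀ n, f (t n) = 0 := by
    intro n
    induction n with
    | zero => simpa [t] using hfvac
    | succ n ih => rw [ht, hft, ih, map_zero]
  let K : ℕ →o Submodule ℂ[X] V :=
    ⟨fun n => LinearMap.ker (f ^ n), by
      apply monotone_nat_of_le_succ
      intro n x hx
      rw [LinearMap.mem_ker] at hx ⊢
      rw [pow_succ', Module.End.mul_apply, hx, map_zero]⟩
  obtain ⟨n, hn⟩ := monotone_stabilizes_iff_noetherian.2 (inferInstance : IsNoetherian ℂ[X] V) K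
  have h3 : u n ∈ K (n + 1) := by
    change u n ∈ LinearMap.ker (f ^ (n + 1))
    rw [LinearMap.mem_ker, pow_succ', Module.End.mul_apply, hmain, LinearMap.map_smul_of_tower,
      hft0, smul_zero]
  rw [← hn (n + 1) (by omega)] at h3
  have h4 : (f ^ n) (u n) = 0 := h3
  rw [hmain, smul_eq_zero] at h4
  rcases h4 with h4 | h4
  · exact Nat.factorial_ne_zero n (by exact_mod_cast h4)
  · exact htne n h4

variable (W) in
/-- Minimal noncommutative situation. -/
structure Minl : Prop where
  good : W.Good
  minr : ∀ S : Submodule ℂ[X] V, W.IsSub S → (∃ x ∈ S, W.D x ≠ 0) →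
    Module.finrank ℂ[X] V ≤ Module.finrank ℂ[X] S
  nc : ∃ x y, ¬ W.Com x y

lemma Good.mode_der (hW : W.Good) (n : ℕ) (v : V) (hv : ∀ j : ℕ, j < n → ∀ x, W.P j v x = 0) :
    W.IsDer (hW.toLin (W.P n v) (P_nat_D_zero n hv)) := by
  intro m x y
  exact P_nat_der n x y (fun j hj => hv j hj x) m

lemma Minl.exists_min (hM : W.Minl) : ∃ k : ℕ, (∃ x y, W.P k x y ≠ 0) ∧
    ∀ j : ℕ, j < k → ∀ x y, W.P j x y = 0 := by
  classical
  have h : ∃ k : ℕ, ∃ x y, W.P k x y ≠ 0 := by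
    obtain ⟨x, y, h⟩ := hM.nc
    simp only [Com, not_forall] at h
    obtain ⟨j, hj⟩ := h
    exact ⟨j, x, y, hj⟩
  refine ⟨Nat.find h, Nat.find_spec h, fun j hj x y => ?_⟩
  by_contra hne
  exact Nat.find_min h hj ⟨x, y, hne⟩

lemma Minl.alpha0 (hM : W.Minl) : ∃ (x y : V) (j : ℕ), W.D (W.P j x y) ≠ 0 := by
  by_contra hall
  push Not at hall
  obtain ⟨k, ⟨x, y, hxy⟩, hk⟩ := hM.exists_min
  have hd := hM.good.mode_der k x (fun j hj => hk j hj x)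
  exact hxy (hM.good.lemN hd (w := y) ((com_kerT (hall x y k) x).symm k) (hall x y k))

lemma Minl.inf (hM : W.Minl) : {μ : ℂ | ∃ x y, W.D (W.lam μ x y) ≠ 0}.Infinite := by
  obtain ⟨x, y, j, hj⟩ := hM.alpha0
  obtain ⟨N, hN⟩ := W.field_ax x y
  obtain ⟨l, hl⟩ : ∃ l : Module.Dual ℂ V, l (W.D (W.P j x y)) ≠ 0 := by
    by_contra h
    push Not at h
    exact hj ((Module.forall_dual_apply_eq_zero_iff ℂ _).1 h)
  let p : ℂ[X] := ∑ i ∈ range N, monomial i (l (W.D (W.P i x y)) / (i.factorial : ℂ))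
  have hjN : j < N := by
    by_contra h
    exact hj (by rw [hN j (by omega), map_zero])
  have hp : p ≠ 0 := by
    intro h
    have := congrArg (fun p => p.coeff j) h
    simp only [p, finsetSum_coeff, coeff_monomial, coeff_zero] at this
    rw [sum_ite_eq' (range N) j, if_pos (mem_range.2 hjN)] at this
    rcases div_eq_zero_iff.1 this with h | h
    · exact hl h
    · exact Nat.factorial_ne_zero j (by exact_mod_cast h)
  have hev : ∀ μ, l (W.D (W.lam μ x y)) = p.eval μ := by
    intro μ
    rw [W.lam_eq μ x y N hN, map_sum, map_sum]
    simp only [p, eval_finsetSum, eval_monomial, map_smul, smul_eq_mul]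
    apply sum_congr rfl
    intro i _
    ring
  intro hfin
  apply hp
  apply eq_zero_of_infinite_isRoot
  refine (Set.Finite.infinite_compl hfin).mono ?_
  intro μ hμ
  simp only [Set.mem_compl_iff, Set.mem_ofPred_eq, not_exists, not_not] at hμ
  change p.eval μ = 0
  rw [← hev, hμ, map_zero]

/-- kernel of the `λ`-action modulo torsion. -/
noncomputable def Good.Kμ (hW : W.Good) (μ : ℂ) : Submodule ℂ[X] V :=
  W.toH hW.hX
    { carrier := {x | ∀ y, W.D (W.lam μ x y) = 0}
      add_mem' := fun ha hb y => by rw [map_add, LinearMap.add_apply, map_add, ha y, hb y, add_zero]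
      zero_mem' := fun y => by simp
      smul_mem' := fun c _ ha y => by
        rw [map_smul, LinearMap.smul_apply, map_smul, ha y, smul_zero] }
    (by
      intro x hx y
      rw [lam_D_left, map_smul, hx y, smul_zero])

lemma Good.mem_Kμ (hW : W.Good) {μ : ℂ} {x : V} : x ∈ hW.Kμ μ ↔ ∀ y, W.D (W.lam μ x y) = 0 :=
  Iff.rfl

lemma Good.f_D (hW : W.Good) (f : V →ₗ[ℂ[X]] V) (x : V) : f (W.D x) = W.D (f x) := by
  rw [← hW.hX, map_smul, hW.hX]

lemma Good.Kμ_stab (hW : W.Good) (μ : ℂ) {f : V →ₗ[ℂ[X]] V} (hf : W.IsDer f) :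
    hW.Kμ μ ≤ (hW.Kμ μ).comap f := by
  intro x hx y
  have h1 := lam_der hf μ x y
  have h2 := congrArg W.D h1
  rw [map_add, hx (f y), add_zero, ← hW.f_D, hx y, map_zero] at h2
  exact h2.symm

lemma Good.eig_mu (hW : W.Good) (μ : ℂ) {f : V →ₗ[ℂ[X]] V} (hf : W.IsDer f) {x0 : V}
    (hx0 : x0 ∉ hW.Kμ μ) : ∃ (β : ℂ) (x : V), x ∉ hW.Kμ μ ∧ f x - β • x ∈ hW.Kμ μ := by
  obtain ⟨P, hm, hP⟩ := LinearMap.exists_monic_and_aeval_eq_zero ℂ[X] f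
  let K := hW.Kμ μ
  let g : Module.End ℂ[X] (V ⧸ K) := K.mapQ K f (hW.Kμ_stab μ hf)
  have hsX : ∀ z : V ⧸ K, (X : ℂ[X]) • z = (-μ) • z := by
    intro z
    obtain ⟨z, rfl⟩ := K.mkQ_surjective z
    rw [← map_smul, ← LinearMap.map_smul_of_tower, ← sub_eq_zero, ← map_sub, Submodule.mkQ_apply,
      Submodule.Quotient.mk_eq_zero]
    intro y
    rw [map_sub, LinearMap.sub_apply, hW.hX, lam_D_left, map_smul, LinearMap.smul_apply, sub_self,
      map_zero]
  have hs : ∀ (q : ℂ[X]) (z : V ⧸ K), q • z = (q.eval (-μ)) • z := by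
    intro q z
    induction q using Polynomial.induction_on' generalizing z with
    | add p q hp hq => rw [add_smul, hp, hq, eval_add, add_smul]
    | monomial n c =>
      rw [← C_mul_X_pow_eq_monomial, mul_smul, C_smul, eval_C_mul, mul_smul, eval_pow, eval_X]
      congr 1
      induction n generalizing z with
      | zero => simp
      | succ n ih => rw [pow_succ, mul_smul, hsX, ih, smul_smul, ← pow_succ]
  have hpow : ∀ (n : ℕ) (z : V), (g ^ n) (K.mkQ z) = K.mkQ ((f ^ n) z) := by
    intro n
    induction n with
    | zero => intro z; rfl
    | succ n ih =>
      intro z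
      rw [pow_succ, pow_succ, Module.End.mul_apply, Module.End.mul_apply, ← ih]; rfl
  obtain ⟨β, w, hw, hβ⟩ := exists_eig g (P.map (evalRingHom (-μ))) (K.mkQ x0)
    (hm.map _).ne_zero
    (by rw [Submodule.mkQ_apply, Ne, Submodule.Quotient.mk_eq_zero]; exact hx0)
    (by
      have h1 := congrArg K.mkQ (LinearMap.congr_fun hP x0)
      rw [aeval_eq_sum_range, LinearMap.sum_apply, map_sum] at h1
      rw [aeval_eq_sum_range' (n := P.natDegree + 1) (by
        have := natDegree_map_le (f := evalRingHom (-μ)) (p := P); omega), LinearMap.sum_apply]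
      rw [LinearMap.zero_apply, map_zero] at h1
      rw [← h1]
      apply sum_congr rfl
      intro i _
      rw [LinearMap.smul_apply, LinearMap.smul_apply, hpow, map_smul, hs (P.coeff i), coeff_map,
        coe_evalRingHom])
  obtain ⟨x, rfl⟩ := K.mkQ_surjective w
  refine ⟨β, x, ?_, ?_⟩
  · rw [Submodule.mkQ_apply, Ne, Submodule.Quotient.mk_eq_zero] at hw; exact hw
  · have : K.mkQ (f x) = β • K.mkQ x := hβ
    rw [← LinearMap.map_smul_of_tower, ← sub_eq_zero, ← map_sub, Submodule.mkQ_apply,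
      Submodule.Quotient.mk_eq_zero] at this
    exact this

lemma Minl.eigT (hM : W.Minl) {f : V →ₗ[ℂ[X]] V} (hf : W.IsDer f) :
    ∃ (d c : ℂ) (w : V), W.D w ≠ 0 ∧ W.D (f w - d • W.D w - c • w) = 0 := by
  have hW := hM.good
  let K := hW.kerD
  have hK : K ≤ K.comap f := by
    intro x hx
    change W.D (f x) = 0
    rw [← hW.f_D, hW.mem_kerD.1 hx, map_zero]
  obtain ⟨d, c, w, hw, h⟩ := lemE (M := V ⧸ K) (M1 := V)
    (by
      intro h x h0 hx
      obtain ⟨x, rfl⟩ := K.mkQ_surjective x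
      rw [← map_smul, Submodule.mkQ_apply, Submodule.Quotient.mk_eq_zero] at hx
      rw [Submodule.mkQ_apply, Submodule.Quotient.mk_eq_zero]
      exact hW.tors_kerD h0 hx)
    f (K.mapQ K f hK) _ hM.inf
    (by
      rintro μ ⟨x0, y0, h0⟩
      obtain ⟨β, x, hx, hfx⟩ := hW.eig_mu μ hf (x0 := x0) (fun h => h0 (h y0))
      refine ⟨β, (K.mkQ.restrictScalars ℂ) ∘ₗ (W.lam μ x), ?_, ?_, ?_⟩
      · rw [hW.mem_Kμ] at hx
        push Not at hx
        obtain ⟨m, hm⟩ := hx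
        refine ⟨m, ?_⟩
        change K.mkQ (W.lam μ x m) ≠ 0
        rw [Submodule.mkQ_apply, Ne, Submodule.Quotient.mk_eq_zero]
        exact hm
      · intro m
        change K.mkQ (W.lam μ x _) = _ • K.mkQ (W.lam μ x m)
        rw [hW.hX, lam_D, ← hW.hX, map_add, add_smul, C_smul, map_smul,
          LinearMap.map_smul_of_tower]
      · intro m
        change K.mkQ (W.lam μ x (f m)) = K.mkQ (f (W.lam μ x m)) - β • K.mkQ (W.lam μ x m)
        rw [← LinearMap.map_smul_of_tower, ← map_sub, ← sub_eq_zero, ← map_sub,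
          Submodule.mkQ_apply, Submodule.Quotient.mk_eq_zero]
        have h1 := hfx m
        rw [map_sub, LinearMap.sub_apply, map_smul, LinearMap.smul_apply] at h1
        rw [lam_der hf]
        change W.D _ = 0
        rw [← neg_eq_zero, ← map_neg, ← h1]
        congr 1
        abel)
  obtain ⟨w, rfl⟩ := K.mkQ_surjective w
  refine ⟨d, c, w, ?_, ?_⟩
  · rw [Submodule.mkQ_apply, Ne, Submodule.Quotient.mk_eq_zero] at hw; exact hw
  · have h1 : K.mkQ (f w) = (C d * X : ℂ[X]) • K.mkQ w + c • K.mkQ w := h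
    rw [mul_smul, C_smul, ← map_smul, ← LinearMap.map_smul_of_tower, ← LinearMap.map_smul_of_tower,
      ← map_add, ← sub_eq_zero, ← map_sub, Submodule.mkQ_apply, Submodule.Quotient.mk_eq_zero,
      hW.hX] at h1
    rw [sub_sub]
    exact h1

lemma Minl.alpha1 (hM : W.Minl) {f : V →ₗ[ℂ[X]] V} (hf : W.IsDer f)
    (hk : ∀ e, W.D e = 0 → f e = 0) : ∃ d : ℂ, ∀ x, f x = d • W.D x := by
  have hW := hM.good
  obtain ⟨d, c, w, hw, h⟩ := hM.eigT hf
  let g : V →ₗ[ℂ[X]] V := f - d • LinearMap.lsmul ℂ[X] V X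
  have hgx : ∀ x, g x = f x - d • W.D x := by
    intro x
    simp [g, hW.hX]
  have hg : W.IsDer g := by
    intro n x y
    simp only [hgx]
    rw [hf, W.D_deriv]
    simp only [map_sub, map_smul, LinearMap.sub_apply, LinearMap.smul_apply]
    module
  have hgk : ∀ e, W.D e = 0 → g e = 0 := by
    intro e he
    rw [hgx, hk e he, he]; simp
  rw [← hgx] at h
  have hc : c = 0 := by
    by_contra hc
    apply hc
    refine hW.der_eig hg (w := w + c⁻¹ • (g w - c • w)) ?_ ?_
    · intro h0
      have := congrArg W.D h0
      rw [map_add, map_smul, h, smul_zero, add_zero, map_zero] at this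
      exact hw this
    · rw [map_add, LinearMap.map_smul_of_tower, hgk _ h, smul_zero, add_zero, smul_add, smul_smul,
        mul_inv_cancel₀ hc, one_smul]
      abel
  rw [hc, zero_smul, sub_zero] at h
  have h0 : g w = 0 := hW.lemN hg (hgk _ h) h
  have hker : W.IsSub (LinearMap.ker g) := by
    refine ⟨?_, ?_⟩
    · exact hgk _ W.D_vac
    · intro n x hx y hy
      rw [LinearMap.mem_ker] at hx hy ⊢
      rw [hg, hx, hy]; simp
  have hr := hM.minr _ hker ⟨w, h0, hw⟩
  have hz : ∀ x, g x = 0 := by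
    intro x
    obtain ⟨p, hp0, hp⟩ := rank_tors (LinearMap.ker g) ⊤ le_top (by rw [finrank_top]; exact hr) x
      Submodule.mem_top
    rw [LinearMap.mem_ker, map_smul] at hp
    have h1 := hW.tors hp0 hp
    exact hW.lemN hg (hgk _ h1) h1
  refine ⟨d, fun x => ?_⟩
  rw [← sub_eq_zero, ← hgx, hz]

end VertexAlgebra
end Chunk8

section Chunk9
open Finset Polynomial

namespace VertexAlgebra

universe u
section
variable {V : Type u} [AddCommGroup V] [Module ℂ V] (W : VertexAlgebra V)

lemma skew_exp (n : ℤ) (a b : V) : ∃ u, W.P n a b = ((-1 : ℂ) ^ (n + 1)) •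
    (W.P n b a - W.D (W.P (n + 1) b a) + (1 / 2 : ℂ) • W.D (W.D (W.P (n + 2) b a))
      + W.D (W.D (W.D u))) := by
  obtain ⟨N, hN⟩ := W.field_int b a
  refine ⟨∑ j ∈ range (N + n.natAbs), (((-1 : ℂ) ^ (j + 3)) / ((j + 3).factorial : ℂ)) •
    (W.D ^ j) (W.P (n + (j + 3 : ℕ)) b a), ?_⟩
  rw [W.skew_fin n a b (N + n.natAbs + 3) (fun j hj => hN _ (by omega)), sum_range_succ',
    sum_range_succ', sum_range_succ']
  have hz : ∀ j : ℕ, (-1 : ℂ) ^ (n + j + 1) = (-1 : ℂ) ^ (n + 1) * (-1) ^ j := by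
    intro j
    rw [show n + j + 1 = (n + 1) + (j : ℤ) by ring, zpow_add₀ (by norm_num), zpow_natCast]
  simp only [hz, mul_div_assoc, mul_smul, ← smul_sum, ← smul_add]
  congr 1
  have e1 : ∑ x ∈ range (N + n.natAbs), ((-1 : ℂ) ^ (x + 1 + 1 + 1) / ((x + 1 + 1 + 1).factorial : ℂ)) •
      (W.D ^ (x + 1 + 1 + 1)) (W.P (n + (x + 1 + 1 + 1 : ℕ)) b a)
      = W.D (W.D (W.D (∑ j ∈ range (N + n.natAbs), (((-1 : ℂ) ^ (j + 3)) / ((j + 3).factorial : ℂ)) •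
    (W.D ^ j) (W.P (n + (j + 3 : ℕ)) b a)))) := by
    simp only [map_sum, map_smul]
    apply sum_congr rfl
    intro j _
    rw [show j + 1 + 1 + 1 = j + 3 by ring]
    congr 1
    rw [pow_succ', pow_succ', pow_succ']; rfl
  rw [e1]
  simp [pow_succ, Nat.factorial]
  module

lemma lam_zero (x y : V) : W.lam 0 x y = W.P 0 x y := by
  obtain ⟨N, hN⟩ := W.field_ax x y
  rw [W.lam_eq 0 x y (N + 1) (fun j hj => hN j (by omega)), sum_range_succ', sum_eq_zero]
  · simp
  · intro j _; simp

end

variable {V : Type u} [AddCommGroup V] [Module ℂ V] {W : VertexAlgebra V}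
variable [Module ℂ[X] V] [IsScalarTower ℂ ℂ[X] V] [Module.Finite ℂ[X] V]

lemma Good.lam_poly_left (hW : W.Good) (μ : ℂ) (q : ℂ[X]) (x y : V) :
    W.lam μ (q • x) y = q.eval (-μ) • W.lam μ x y := by
  induction q using Polynomial.induction_on' generalizing x with
  | add p q hp hq => rw [add_smul, map_add, LinearMap.add_apply, hp, hq, eval_add, add_smul]
  | monomial n c =>
    rw [← C_mul_X_pow_eq_monomial, mul_smul, C_smul, eval_C_mul, mul_smul, eval_pow, eval_X,
      map_smul, LinearMap.smul_apply]
    congr 1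
    induction n generalizing x with
    | zero => simp
    | succ n ih => rw [pow_succ, mul_smul, ih, hW.hX, lam_D_left, smul_smul, ← pow_succ]

lemma Good.lam_poly (hW : W.Good) (μ : ℂ) (q : ℂ[X]) (x y : V) :
    W.lam μ x (q • y) = taylor μ q • W.lam μ x y := by
  apply shift_smul (W.lam μ x) μ
  intro m
  rw [hW.hX, lam_D, add_smul, hW.hX, C_smul]

lemma Minl.mode_T (hM : W.Minl) (n : ℕ) (v : V) (hv : ∀ j : ℕ, j < n → ∀ x, W.P j v x = 0) :
    ∃ d : ℂ, ∀ x, W.P n v x = d • W.D x :=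
  hM.alpha1 (hM.good.mode_der n v hv) (fun _ he => (com_kerT he v).symm n)

lemma Minl.zero_mode (hM : W.Minl) : ∃ L : V, (∀ y, W.P 0 L y = W.D y) := by
  have hW := hM.good
  obtain ⟨k, ⟨x, y, hxy⟩, hk⟩ := hM.exists_min
  obtain ⟨d, hd⟩ := hM.mode_T k x (fun j hj => hk j hj x)
  have hd0 : d ≠ 0 := by
    rintro rfl
    exact hxy (by rw [hd, zero_smul])
  have hDy : W.D y ≠ 0 := fun h => hxy (by rw [hd, h, smul_zero])
  have hL : ∀ y, W.P k (d⁻¹ • x) y = W.D y := by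
    intro y
    rw [map_smul, LinearMap.smul_apply, hd, smul_smul, inv_mul_cancel₀ hd0, one_smul]
  generalize d⁻¹ • x = L at hL
  cases k with
  | zero => exact ⟨L, hL⟩
  | succ n =>
    exfalso
    obtain ⟨u, hu⟩ := W.skew_exp n L L
    have hn0 := hk n (by omega) L L
    have hLL := hL L
    push_cast at hLL
    rw [hn0, hLL, eq_comm, smul_eq_zero] at hu
    have hu := hu.resolve_left (zpow_ne_zero _ (by norm_num))
    set l := W.P (n + 2) L L with hl
    have e0 : W.D (W.D (-L + (1 / 2 : ℂ) • l + W.D u)) = 0 := by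
      rw [← hu]
      simp only [map_add, map_neg, map_smul]
      abel
    have e1 := hW.D_sq e0
    have e2 := com_kerT e1 y (n + 1)
    have e3 : W.P (n + 1 : ℕ) (W.D u) y = 0 := by
      rw [W.transl_inv, show ((n + 1 : ℕ) : ℤ) - 1 = (n : ℤ) by push_cast; ring, hk n (by omega),
        smul_zero]
    rw [map_add, LinearMap.add_apply, e3, add_zero, map_add, LinearMap.add_apply, map_neg,
      LinearMap.neg_apply, hL, map_smul, LinearMap.smul_apply] at e2
    have c1 := W.comm_nat L L (n + 1 + 1) (n + 1 : ℕ) y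
    rw [hL, sum_range_succ, sum_range_succ, sum_eq_zero] at c1
    · rw [W.P_D, hL, hL L, W.transl_inv, Nat.choose_self] at c1
      have i1 : ((n + 1 + 1 : ℕ) : ℤ) - 1 = (n + 1 : ℕ) := by push_cast; ring
      have i2 : ((n + 1 + 1 : ℕ) : ℤ) + ((n + 1 : ℕ) : ℤ) - ((n + 1 : ℕ) : ℤ) - 1 = (n + 1 : ℕ) := by
        push_cast; ring
      have i3 : ((n + 1 + 1 : ℕ) : ℤ) + ((n + 1 : ℕ) : ℤ) - ((n + 1 + 1 : ℕ) : ℤ) = (n + 1 : ℕ) := by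
        push_cast; ring
      have i4 : W.P ((n + 1 + 1 : ℕ) : ℤ) L L = l := by
        rw [hl]; congr 3
      rw [i1, i2, i3, i4, hL, Nat.choose_succ_self_right] at c1
      have c2 : (((n : ℂ) + 2) * (n + 3) / 2 - 1) • W.D y = 0 := by
        have c3 : W.P (n + 1 : ℕ) l y = (((n : ℂ) + 2) * (n + 3)) • W.D y := by
          have := sub_eq_zero.2 c1
          push_cast at this ⊢
          rw [← sub_eq_zero, ← neg_eq_zero, ← this]
          module
        rw [c3] at e2
        rw [← e2]
        module
      rw [smul_eq_zero] at c2
      rcases c2 with c2 | c2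
      · have : ((n : ℂ) + 2) * (n + 3) = 2 := by linear_combination 2 * c2
        have h3 : (n + 2) * (n + 3) = 2 := by exact_mod_cast this
        nlinarith
      · exact hDy c2
    · intro j hj
      rw [hk j (mem_range.1 hj)]
      simp

lemma Minl.span (hM : W.Minl) {L : V} (hL : ∀ y, W.P 0 L y = W.D y) (x : V) :
    ∃ (d : ℂ) (u τ : V), W.D τ = 0 ∧ x = d • L + W.D u + τ := by
  have hW := hM.good
  obtain ⟨d, hd⟩ := hM.mode_T 0 x (fun j hj => by omega)
  have h0 : ∀ y, W.P 0 (x - d • L) y = 0 := by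
    intro y
    have := hd y
    rw [map_sub, LinearMap.sub_apply, map_smul, LinearMap.smul_apply, hL]
    rw [← this]
    simp
  obtain ⟨d1, hd1⟩ := hM.mode_T 1 (x - d • L) (fun j hj y => by
    obtain rfl : j = 0 := by omega
    exact h0 y)
  set a := x - d • L + d1 • W.D L with ha
  have ha0 : ∀ y, W.P 0 a y = 0 := by
    intro y
    rw [ha, map_add, LinearMap.add_apply, h0, map_smul, LinearMap.smul_apply, W.transl_inv]
    simp
  have ha1 : ∀ y, W.P 1 a y = 0 := by
    intro y
    have := hd1 y
    rw [Nat.cast_one] at this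
    rw [ha, map_add, LinearMap.add_apply, this, map_smul, LinearMap.smul_apply, W.transl_inv,
      sub_self, hL]
    simp
  obtain ⟨u, hu⟩ := W.skew_exp 0 L a
  rw [hL, ha0, zero_add, ha1, map_zero, sub_zero, zero_add, zero_add, zpow_one] at hu
  set z := (1 / 2 : ℂ) • W.P 2 a L + W.D u with hz
  have e : W.D (a + W.D z) = 0 := by
    rw [map_add, hu, hz]
    simp only [map_add, map_smul]
    module
  refine ⟨d, -d1 • L - z, a + W.D z, e, ?_⟩
  rw [map_sub, map_smul, ha]
  module

lemma Minl.rk1 (hM : W.Minl) : ∃ L : V, W.D L ≠ 0 ∧ (∀ y, W.P 0 L y = W.D y) ∧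
    ∀ x, ∃ (q : ℂ[X]) (τ : V), W.D τ = 0 ∧ x = q • L + τ := by
  have hW := hM.good
  obtain ⟨L, hL⟩ := hM.zero_mode
  obtain ⟨g, hg⟩ : ∃ g : V, ∀ x, ∃ (q : ℂ[X]) (τ : V), W.D τ = 0 ∧ x = q • g + τ := by
    let K := hW.kerD
    have htf : Module.IsTorsionFree ℂ[X] (V ⧸ K) := by
      apply Module.IsTorsionFree.of_smul_eq_zero
      intro h x hx
      by_contra hne
      push Not at hne
      apply hne.2
      obtain ⟨x, rfl⟩ := K.mkQ_surjective x
      rw [← map_smul, Submodule.mkQ_apply, Submodule.Quotient.mk_eq_zero] at hx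
      rw [Submodule.mkQ_apply, Submodule.Quotient.mk_eq_zero]
      exact hW.tors_kerD hne.1 hx
    obtain ⟨n, b⟩ := Module.basisOfFiniteTypeTorsionFree' (R := ℂ[X]) (M := V ⧸ K)
    have hsp : ∀ m : V ⧸ K, ∃ (d : ℂ) (u : V ⧸ K), m = d • K.mkQ L + (X : ℂ[X]) • u := by
      intro m
      obtain ⟨m, rfl⟩ := K.mkQ_surjective m
      obtain ⟨d, u, τ, hτ, rfl⟩ := hM.span hL m
      refine ⟨d, K.mkQ u, ?_⟩
      have : K.mkQ τ = 0 := by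
        rw [Submodule.mkQ_apply, Submodule.Quotient.mk_eq_zero]; exact hτ
      rw [map_add, this, add_zero, map_add, LinearMap.map_smul_of_tower, ← hW.hX, map_smul]
    have hn : ∀ i j : Fin n, i = j := by
      intro i j
      by_contra hij
      obtain ⟨c, u, hc⟩ := hsp (b i)
      obtain ⟨c', u', hc'⟩ := hsp (b j)
      have h1 : c' • b i - c • b j = (X : ℂ[X]) • (c' • u - c • u') := by
        nth_rw 1 [hc, hc']
        rw [smul_sub, smul_comm X c', smul_comm X c]
        module
      have hcz : ∀ c : ℂ, ∀ v : ℂ[X], C c = X * v → c = 0 := by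
        intro c v h
        have := congrArg (eval 0) h
        simpa using this
      have h2 := congrArg (fun z => b.repr z i) h1
      have h3 := congrArg (fun z => b.repr z i) hc
      have hc'0 : c' = 0 := by
        apply hcz c' (b.repr (c' • u - c • u') i)
        rw [← C_smul c', ← C_smul c] at h2
        simp [Ne.symm hij] at h2
        simpa [← C_smul] using h2
      rw [hc'0, zero_smul, zero_add] at hc'
      have h4 := congrArg (fun z => b.repr z j) hc'
      simp at h4
      have := hcz 1 _ (by simpa using h4)
      exact one_ne_zero this
    by_cases hn0 : n = 0
    · subst hn0
      refine ⟨0, fun x => ⟨0, x, ?_, by simp⟩⟩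
      have : K.mkQ x = 0 := by
        apply b.repr.injective
        ext i
        exact i.elim0
      rw [Submodule.mkQ_apply, Submodule.Quotient.mk_eq_zero] at this
      exact this
    · let i0 : Fin n := ⟨0, by omega⟩
      obtain ⟨g, hg⟩ := K.mkQ_surjective (b i0)
      refine ⟨g, fun x => ⟨b.repr (K.mkQ x) i0, x - b.repr (K.mkQ x) i0 • g, ?_, by abel⟩⟩
      have : K.mkQ (x - b.repr (K.mkQ x) i0 • g) = 0 := by
        rw [map_sub, map_smul, hg, sub_eq_zero]
        conv_lhs => rw [← b.sum_repr (K.mkQ x)]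
        rw [Fintype.sum_eq_single i0]
        intro i hi
        exact absurd (hn i i0) hi
      rw [Submodule.mkQ_apply, Submodule.Quotient.mk_eq_zero] at this
      exact this
  obtain ⟨x0, y0, j0, h0⟩ := hM.alpha0
  obtain ⟨d, hd⟩ := hM.mode_T 0 g (fun j hj => by omega)
  rw [Nat.cast_zero] at hd
  have hd0 : d ≠ 0 := by
    rintro rfl
    obtain ⟨q, τ, hτ, hq⟩ := hg L
    have h1 := hL (W.P j0 x0 y0)
    rw [hq, map_add, LinearMap.add_apply, com_of_D hτ 0 (by norm_num), add_zero, ← lam_zero,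
      hW.lam_poly_left, lam_zero, hd, zero_smul, smul_zero] at h1
    exact h0 h1.symm
  have hgen : ∀ x, ∃ (q : ℂ[X]) (τ : V), W.D τ = 0 ∧ x = q • (d⁻¹ • g) + τ := by
    intro x
    obtain ⟨q, τ, hτ, hq⟩ := hg x
    refine ⟨C d * q, τ, hτ, ?_⟩
    rw [mul_smul, C_smul, smul_comm q d⁻¹, smul_smul, mul_inv_cancel₀ hd0, one_smul]
    exact hq
  refine ⟨d⁻¹ • g, ?_, ?_, hgen⟩
  · intro h
    apply h0
    obtain ⟨q, τ, hτ, hq⟩ := hgen (W.P j0 x0 y0)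
    rw [hq, map_add, hτ, add_zero, ← hW.hX, smul_comm, hW.hX, h, smul_zero]
  · intro y
    rw [map_smul, LinearMap.smul_apply, hd, smul_smul, inv_mul_cancel₀ hd0, one_smul]

end VertexAlgebra
end Chunk9

section Chunk10
open Finset Polynomial

namespace VertexAlgebra

section rankone
variable {r : ℕ → ℂ[X] →ₗ[ℂ] ℂ[X] →ₗ[ℂ] ℂ[X]}

/-- leading-coefficient bookkeeping for the right argument -/
lemma ro_low (h2 : ∀ k h, r (k+1) 1 (X * h) = X * r (k+1) 1 h + ((k:ℂ)+1) • r k 1 h)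
    (h0 : ∀ h, r 0 1 h = X * h) (d K : ℕ)
    (hK : ∀ k < K, ∀ m, d ≤ m → (r k 1 1).coeff m = 0) (i : ℕ) :
    ∀ k ≤ K, ∀ m, i + d ≤ m + 1 → (r k 1 (X^i) - X^i * r k 1 1).coeff m = 0 := by
  induction i with
  | zero => intro k _ m _; simp
  | succ i ih =>
    intro k hk m hm
    cases k with
    | zero => rw [h0, h0]; ring_nf; simp
    | succ k =>
      have e : r (k+1) 1 (X^(i+1)) - X^(i+1) * r (k+1) 1 1
          = X * (r (k+1) 1 (X^i) - X^i * r (k+1) 1 1)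
            + ((k:ℂ)+1) • ((r k 1 (X^i) - X^i * r k 1 1) + X^i * r k 1 1) := by
        rw [pow_succ', h2, sub_add_cancel]; ring
      rw [e, coeff_add, coeff_smul, coeff_add, ih k (by omega) m (by omega), coeff_X_pow_mul']
      have e2 : (X * (r (k+1) 1 (X^i) - X^i * r (k+1) 1 1)).coeff m = 0 := by
        cases m with
        | zero => simp
        | succ m => rw [coeff_X_mul, ih (k+1) hk m (by omega)]
      rw [e2, if_pos (by omega), hK k (by omega) _ (by omega)]
      simp

lemma ro_top (h2 : ∀ k h, r (k+1) 1 (X * h) = X * r (k+1) 1 h + ((k:ℂ)+1) • r k 1 h)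
    (h0 : ∀ h, r 0 1 h = X * h) (d K : ℕ)
    (hK : ∀ k < K, ∀ m, d ≤ m → (r k 1 1).coeff m = 0) (i : ℕ) :
    ∀ m, i + d ≤ m + 1 → (r (K+1) 1 (X^i) - X^i * r (K+1) 1 1).coeff m
      = ((K:ℂ)+1) * i * (X^i * r K 1 1).coeff (m+1) := by
  induction i with
  | zero => intro m _; simp
  | succ i ih =>
    intro m hm
    have e : r (K+1) 1 (X^(i+1)) - X^(i+1) * r (K+1) 1 1
          = X * (r (K+1) 1 (X^i) - X^i * r (K+1) 1 1)
            + ((K:ℂ)+1) • ((r K 1 (X^i) - X^i * r K 1 1) + X^i * r K 1 1) := by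
        rw [pow_succ', h2, sub_add_cancel]; ring
    have e3 : (X^(i+1) * r K 1 1).coeff (m+1) = (X^i * r K 1 1).coeff m := by
      rw [pow_succ', mul_assoc, coeff_X_mul]
    rw [e, coeff_add, coeff_smul, coeff_add, ro_low h2 h0 d K hK i K le_rfl m (by omega), e3]
    have e2 : (X * (r (K+1) 1 (X^i) - X^i * r (K+1) 1 1)).coeff m
        = ((K:ℂ)+1) * i * (X^i * r K 1 1).coeff m := by
      cases m with
      | zero =>
        have : i = 0 := by omega
        subst this; simp
      | succ m => rw [coeff_X_mul, ih m (by omega)]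
    rw [e2]
    simp only [smul_eq_mul]; push_cast; ring

lemma ro_left (h1 : ∀ k f h, r (k+1) (X * f) h = (-((k:ℂ)+1)) • r k f h)
    (h1' : ∀ f h, r 0 (X * f) h = 0) (d : ℕ)
    (hd : ∀ k m, d < m → (r k 1 1).coeff m = 0) (f : ℂ[X]) :
    ∀ k m, d < m → (r k f 1).coeff m = 0 := by
  induction f using Polynomial.induction_on' with
  | add p q hp hq => intro k m hm; rw [map_add, LinearMap.add_apply, coeff_add, hp k m hm, hq k m hm, add_zero]
  | monomial n a =>
    rw [← C_mul_X_pow_eq_monomial, ← smul_eq_C_mul]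
    suffices h : ∀ k m, d < m → (r k (X^n) 1).coeff m = 0 by
      intro k m hm
      rw [map_smul, LinearMap.smul_apply, coeff_smul, h k m hm, smul_zero]
    induction n with
    | zero => simpa using hd
    | succ n ih =>
      intro k m hm
      rw [pow_succ']
      cases k with
      | zero => rw [h1']; simp
      | succ k => rw [h1, coeff_smul, ih k m hm, smul_zero]

lemma ro_one (h2 : ∀ k h, r (k+1) 1 (X * h) = X * r (k+1) 1 h + ((k:ℂ)+1) • r k 1 h)
    (h0 : ∀ h, r 0 1 h = X * h) (f : ℂ[X]) :
    r 1 1 f = f * r 1 1 1 + X * derivative f := by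
  induction f using Polynomial.induction_on' with
  | add p q hp hq => rw [map_add, hp, hq, derivative_add]; ring
  | monomial n a =>
    rw [← C_mul_X_pow_eq_monomial, ← smul_eq_C_mul, map_smul, derivative_smul, smul_mul_assoc,
      mul_smul_comm, ← smul_add]
    congr 1
    induction n with
    | zero => simp
    | succ n ih =>
      rw [pow_succ', h2 0, ih, h0, derivative_X_pow, ← pow_succ', derivative_X_pow]
      simp only [CharP.cast_eq_zero, zero_add, one_smul, Nat.add_sub_cancel]
      cases n with
      | zero => simp
      | succ n =>
        simp only [Nat.add_sub_cancel]; push_cast; simp only [map_add, map_natCast, map_one]; ring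

lemma rankone (h1 : ∀ k f h, r (k+1) (X * f) h = (-((k:ℂ)+1)) • r k f h)
    (h1' : ∀ f h, r 0 (X * f) h = 0)
    (h2 : ∀ k h, r (k+1) 1 (X * h) = X * r (k+1) 1 h + ((k:ℂ)+1) • r k 1 h)
    (h0 : ∀ h, r 0 1 h = X * h)
    (h3 : ∀ k h, r 1 1 (r k 1 h) - r k 1 (r 1 1 h) = r (k+1) (r 0 1 1) h + r k (r 1 1 1) h)
    (hfin : ∃ N, ∀ k, N ≤ k → r k 1 1 = 0) :
    r 1 1 1 = 2 ∧ ∀ k, 2 ≤ k → r k 1 1 = 0 := by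
  have h3' : ∀ k h, r 1 1 (r k 1 h) - r k 1 (r 1 1 h)
      = (-((k:ℂ)+1)) • r k 1 h + r k (r 1 1 1) h := by
    intro k h
    rw [h3, h0, h1]
  obtain ⟨g, hg⟩ : ∃ g, g = r 1 1 1 := ⟨_, rfl⟩
  have hdeg : g.natDegree < 2 := by
    by_contra hn
    push Not at hn
    obtain ⟨N, hN⟩ := hfin
    have hex : ∃ d, ∀ k m, d < m → (r k 1 1).coeff m = 0 := by
      refine ⟨(range N).sup (fun k => (r k 1 1).natDegree), ?_⟩
      intro k m hm
      by_cases hk : N ≤ k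
      · rw [hN k hk]; simp
      · apply coeff_eq_zero_of_natDegree_lt
        refine lt_of_le_of_lt ?_ hm
        exact Finset.le_sup (f := fun k => (r k 1 1).natDegree) (by simpa using hk)
    classical
    obtain ⟨d, hd, hmin⟩ : ∃ d, (∀ k m, d < m → (r k 1 1).coeff m = 0) ∧
        ∃ k, (r k 1 1).coeff d ≠ 0 := by
      refine ⟨Nat.find hex, Nat.find_spec hex, ?_⟩
      by_contra hcon
      push Not at hcon
      rcases Nat.eq_zero_or_pos (Nat.find hex) with h | h
      · have e1 : (r 0 1 1).coeff 1 = 0 := Nat.find_spec hex 0 1 (by omega)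
        rw [h0] at e1
        simp at e1
      · apply Nat.find_min hex (m := Nat.find hex - 1) (by omega)
        intro k m hm
        rcases eq_or_lt_of_le (show Nat.find hex ≤ m by omega) with h' | h'
        · rw [← h']; exact hcon k
        · exact Nat.find_spec hex k m h'
    obtain ⟨K, hKne, hK'⟩ : ∃ K, (r K 1 1).coeff d ≠ 0 ∧ ∀ k < K, (r k 1 1).coeff d = 0 :=
      ⟨Nat.find hmin, Nat.find_spec hmin, fun k hk => by simpa using Nat.find_min hmin hk⟩
    have hK : ∀ k < K, ∀ m, d ≤ m → (r k 1 1).coeff m = 0 := by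
      intro k hk m hm
      rcases eq_or_lt_of_le hm with h | h
      · rw [← h]; exact hK' k hk
      · exact hd k m h
    obtain ⟨m, hm⟩ : ∃ m, m + 1 = g.natDegree + d := ⟨g.natDegree + d - 1, by omega⟩
    have hsum : (r (K+1) 1 g - g * r (K+1) 1 1).coeff m
        = ((K:ℂ)+1) * g.natDegree * (g.coeff g.natDegree * (r K 1 1).coeff d) := by
      have e : r (K+1) 1 g - g * r (K+1) 1 1 = ∑ i ∈ range (g.natDegree + 1),
          g.coeff i • (r (K+1) 1 (X^i) - X^i * r (K+1) 1 1) := by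
        conv_lhs => rw [g.as_sum_range_C_mul_X_pow]
        rw [map_sum, sum_mul, ← sum_sub_distrib]
        apply sum_congr rfl
        intro i _
        rw [← smul_eq_C_mul, map_smul, smul_mul_assoc, smul_sub]
      rw [e, finsetSum_coeff, sum_range_succ, sum_eq_zero, zero_add, coeff_smul,
        ro_top h2 h0 d K hK _ m (by omega), hm, coeff_X_pow_mul', if_pos (by omega),
        Nat.add_sub_cancel_left, smul_eq_mul]
      · ring
      · intro i hi
        rw [mem_range] at hi
        rw [coeff_smul, ro_top h2 h0 d K hK _ m (by omega), coeff_X_pow_mul', if_pos (by omega),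
          hd _ _ (by omega)]
        simp
    have hz : (r (K+1) 1 g - g * r (K+1) 1 1).coeff m = 0 := by
      have e : r (K+1) 1 g - g * r (K+1) 1 1
          = X * derivative (r (K+1) 1 1) + ((K:ℂ)+1+1) • r (K+1) 1 1 - r (K+1) g 1 := by
        have := h3' (K+1) 1
        rw [← hg, ro_one h2 h0 (r (K+1) 1 1), ← hg] at this
        push_cast at this
        rw [neg_smul] at this
        linear_combination - this
      have e2 : (X * derivative (r (K+1) 1 1)).coeff m = 0 := by
        cases m with
        | zero => simp
        | succ m => rw [coeff_X_mul, coeff_derivative, hd _ _ (by omega), zero_mul]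
      rw [e, coeff_sub, coeff_add, e2, coeff_smul, hd _ _ (by omega),
        ro_left h1 h1' d hd g _ _ (by omega)]
      simp
    rw [hz] at hsum
    have hgn : g.coeff g.natDegree ≠ 0 := by
      have : g ≠ 0 := by rintro rfl; simp at hn
      simpa using this
    have hK1 : (K:ℂ) + 1 ≠ 0 := by exact_mod_cast Nat.succ_ne_zero K
    have hn0 : (g.natDegree : ℂ) ≠ 0 := by
      have : g.natDegree ≠ 0 := by omega
      exact_mod_cast this
    exact (mul_ne_zero (mul_ne_zero hK1 hn0) (mul_ne_zero hgn hKne)) hsum.symm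
  obtain ⟨a, b, hab⟩ : ∃ a b, g = C a * X + C b := exists_eq_X_add_C_of_natDegree_le_one (by omega)
  have hrg : ∀ h, r 1 g h = b • r 1 1 h - a • (X * h) := by
    intro h
    have := h1 0 1 h
    rw [mul_one, h0] at this
    simp only [zero_add, CharP.cast_eq_zero] at this
    rw [hab, ← smul_eq_C_mul, map_add, map_smul, ← mul_one (C b), ← smul_eq_C_mul, map_smul,
      LinearMap.add_apply, LinearMap.smul_apply, LinearMap.smul_apply, this]
    module
  have hcom : ∀ h, (b - 2) • r 1 1 h = a • (X * h) := by
    intro h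
    have := h3' 1 h
    rw [sub_self, ← hg, hrg] at this
    push_cast at this
    have e : (b - 2) • r 1 1 h - a • (X * h) = 0 := by
      rw [this]; module
    exact sub_eq_zero.1 e
  have hc1 := hcom 1
  rw [← hg, hab] at hc1
  have k0 := congrArg (fun p => p.coeff 0) hc1
  have k1 := congrArg (fun p => p.coeff 1) hc1
  simp at k0 k1
  have hcX := hcom X
  rw [ro_one h2 h0, ← hg] at hcX
  have hg2 : g = 2 := by
    have hb : b = 2 := by
      by_contra hb
      have hb2 : b - 2 ≠ 0 := sub_ne_zero.2 hb
      have hb0 : b = 0 := by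
        rcases k0 with h | h
        · exact absurd h hb2
        · exact h
      subst hb0
      have ha : a = 0 := by linear_combination (-1/3 : ℂ) * k1
      subst ha
      rw [hab] at hcX
      have := congrArg (fun p => p.coeff 1) hcX
      simp at this
    subst hb
    have ha : a = 0 := by simpa using k1.symm
    rw [hab, ha]; simp; rfl
  refine ⟨hg ▸ hg2, ?_⟩
  intro k hk
  have := h3' k 1
  have hr2 : r k 2 1 = (2:ℂ) • r k 1 1 := by
    rw [← LinearMap.smul_apply, ← map_smul]; congr 2
    rw [smul_eq_C_mul, mul_one]; rfl
  have hr2' : r k 1 2 = (2:ℂ) • r k 1 1 := by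
    rw [← map_smul]; congr 1
    rw [smul_eq_C_mul, mul_one]; rfl
  rw [ro_one h2 h0 (r k 1 1), ← hg, hg2, hr2, hr2'] at this
  ext m
  have hm := congrArg (fun p => p.coeff m) this
  simp only [coeff_sub, coeff_add, coeff_smul, smul_eq_mul, coeff_mul_ofNat] at hm
  have e2 : (X * derivative (r k 1 1)).coeff m = m * (r k 1 1).coeff m := by
      cases m with
      | zero => simp
      | succ m => rw [coeff_X_mul, coeff_derivative]; push_cast; ring
  rw [e2] at hm
  have : ((m:ℂ) + k - 1) * (r k 1 1).coeff m = 0 := by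
    linear_combination hm
  rcases mul_eq_zero.1 this with h | h
  · exfalso
    have : ((m + k : ℕ) : ℂ) = ((1:ℕ):ℂ) := by push_cast; linear_combination h
    have := Nat.cast_injective this
    omega
  · simpa using h

end rankone
end VertexAlgebra
end Chunk10

section Chunk11
open Finset Polynomial

namespace VertexAlgebra

variable {V : Type*} [AddCommGroup V] [Module ℂ V] {W : VertexAlgebra V}
variable [Module ℂ[X] V] [IsScalarTower ℂ ℂ[X] V] [Module.Finite ℂ[X] V]

lemma Good.exists_coord (hW : W.Good) {L : V} (hL : W.D L ≠ 0)
    (hgen : ∀ x, ∃ (q : ℂ[X]) (τ : V), W.D τ = 0 ∧ x = q • L + τ) :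
    ∃ c : V →ₗ[ℂ[X]] ℂ[X], c L = 1 ∧ (∀ τ, W.D τ = 0 → c τ = 0) ∧
      ∀ x, W.D (x - c x • L) = 0 := by
  have hDs : ∀ (q : ℂ[X]) x, W.D (q • x) = q • W.D x := by
    intro q x; rw [← hW.hX, smul_comm, hW.hX]
  have huniq : ∀ q q' : ℂ[X], W.D (q • L - q' • L) = 0 → q = q' := by
    intro q q' h
    by_contra hne
    rw [← sub_smul] at h
    apply hL
    exact hW.mem_kerD.1 (hW.tors_kerD (sub_ne_zero.2 hne) (hW.mem_kerD.2 h))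
  choose q τ hτ hq using hgen
  have hq' : ∀ x, W.D x = q x • W.D L := by
    intro x; conv_lhs => rw [hq x]
    rw [map_add, hτ, add_zero, hDs]
  have hu2 : ∀ x p, W.D x = p • W.D L → q x = p := by
    intro x p h
    apply huniq
    rw [map_sub, hDs, hDs, ← hq', h, sub_self]
  let c : V →ₗ[ℂ[X]] ℂ[X] :=
    { toFun := q
      map_add' := fun x y => hu2 _ _ (by rw [map_add, hq' x, hq' y, add_smul])
      map_smul' := fun p x => hu2 _ _ (by
        rw [hDs, hq' x, RingHom.id_apply, smul_eq_mul, mul_smul]) }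
  refine ⟨c, hu2 _ _ (by rw [one_smul]), fun τ h => hu2 _ _ (by rw [h, zero_smul]), ?_⟩
  intro x
  rw [map_sub, hDs, hq' x]
  exact sub_self _

lemma Good.vir (hW : W.Good) {L : V} (hL : W.D L ≠ 0) (h0 : ∀ y, W.P 0 L y = W.D y)
    (hgen : ∀ x, ∃ (q : ℂ[X]) (τ : V), W.D τ = 0 ∧ x = q • L + τ) :
    ∃ c : V →ₗ[ℂ[X]] ℂ[X], c L = 1 ∧ (∀ τ, W.D τ = 0 → c τ = 0) ∧
      (∀ x, W.D (x - c x • L) = 0) ∧ c (W.P 1 L L) = 2 ∧ ∀ k : ℕ, 2 ≤ k → c (W.P k L L) = 0 := by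
  obtain ⟨c, c1, c2, c3⟩ := hW.exists_coord hL hgen
  refine ⟨c, c1, c2, c3, ?_⟩
  have hcs : ∀ (a : ℂ) v, c (a • v) = a • c v := fun a v => c.map_smul_of_tower a v
  let r : ℕ → ℂ[X] →ₗ[ℂ] ℂ[X] →ₗ[ℂ] ℂ[X] := fun k =>
    LinearMap.mk₂ ℂ (fun f h => c (W.P k (f • L) (h • L)))
      (fun f f' h => by rw [add_smul, map_add, LinearMap.add_apply, map_add])
      (fun a f h => by
        rw [smul_assoc, map_smul (W.P k), LinearMap.smul_apply, hcs])
      (fun f h h' => by rw [add_smul, map_add, map_add])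
      (fun a f h => by rw [smul_assoc, map_smul, hcs])
  have hr : ∀ k f h, r k f h = c (W.P k (f • L) (h • L)) := fun k f h => rfl
  have hcl : ∀ (k : ℕ) x y, c (W.P k (c x • L) y) = c (W.P k x y) := by
    intro k x y
    have := com_kerT (c3 x) y k
    rw [map_sub, LinearMap.sub_apply, sub_eq_zero] at this
    rw [this]
  have hcr : ∀ (k : ℕ) x y, c (W.P k y (c x • L)) = c (W.P k y x) := by
    intro k x y
    have := (com_kerT (c3 x) y).symm k
    rw [map_sub, sub_eq_zero] at this
    rw [this]
  have hcD : ∀ x, c (W.D x) = X * c x := by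
    intro x; rw [← hW.hX, map_smul, smul_eq_mul]
  have i1 : ∀ k : ℕ, ((k+1 : ℕ) : ℤ) - 1 = k := by intro k; push_cast; ring
  have key := rankone (r := r) (by
      intro k f h
      rw [hr, hr, mul_smul, hW.hX, W.transl_inv, hcs, i1]
      push_cast; rfl) (by
      intro f h
      rw [hr, mul_smul, hW.hX, W.transl_inv]; simp) (by
      intro k h
      rw [hr, hr, hr, mul_smul, hW.hX, W.P_D, map_add, hcD, hcs, i1]
      push_cast; rfl) (by
      intro h
      rw [hr, one_smul, Nat.cast_zero, h0, hcD, map_smul, c1, smul_eq_mul, mul_one]) (by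
      intro k h
      simp only [hr, one_smul]
      rw [hcr, hcr, hcl, hcl, ← map_sub, ← map_add]
      congr 1
      have := W.comm_nat L L 1 k (h • L)
      rw [this]
      simp only [sum_range_succ, sum_range_zero]
      simp
      rw [add_comm (1:ℤ) k]) (by
      obtain ⟨N, hN⟩ := W.field_ax L L
      refine ⟨N, fun k hk => ?_⟩
      rw [hr, one_smul, hN k hk, map_zero])
  simp only [hr, one_smul] at key
  exact key

lemma Good.no_vir (hW : W.Good) {L : V} (hL : W.D L ≠ 0) (h0 : ∀ y, W.P 0 L y = W.D y)
    (hgen : ∀ x, ∃ (q : ℂ[X]) (τ : V), W.D τ = 0 ∧ x = q • L + τ) 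
    (h1 : W.P 1 L L = (2:ℂ) • L) : False := by
  obtain ⟨c, c1, c2, c3, -, ck⟩ := hW.vir hL h0 hgen
  have hcs : ∀ (a : ℂ) v, c (a • v) = a • c v := fun a v => c.map_smul_of_tower a v
  have hDs : ∀ (q : ℂ[X]) x, W.D (q • x) = q • W.D x := by
    intro q x; rw [← hW.hX, smul_comm, hW.hX]
  have hk : ∀ k : ℕ, 2 ≤ k → W.D (W.P k L L) = 0 := by
    intro k hk
    have := c3 (W.P k L L)
    rwa [ck k hk, zero_smul, sub_zero] at this
  have hcD : ∀ x, c (W.D x) = X * c x := by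
    intro x; rw [← hW.hX, map_smul, smul_eq_mul]
  have hk0 : ∀ k : ℕ, 2 ≤ k → k ≠ 3 → W.P k L L = 0 := by
    intro k h2 h3
    have := W.comm_nat L L 1 k L
    simp only [sum_range_succ, sum_range_zero] at this
    simp only [Nat.cast_one, Nat.cast_zero, Nat.choose_zero_right, Nat.choose_self, one_smul,
      zero_add, sub_zero, h0, W.transl_inv, h1, map_smul, LinearMap.smul_apply] at this
    have z := (com_kerT (hk k h2) L).symm 1
    rw [Nat.cast_one] at z
    rw [add_sub_cancel_left, z] at this
    have e : ((3:ℂ) - k) • W.P k L L = 0 := by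
      refine Eq.trans ?_ this.symm
      push_cast; module
    rcases smul_eq_zero.1 e with h | h
    · exfalso
      apply h3
      have : ((k:ℕ):ℂ) = ((3:ℕ):ℂ) := by push_cast; linear_combination -h
      exact Nat.cast_injective this
    · exact h
  obtain ⟨γ, hγ⟩ : ∃ γ, γ = W.P 3 L L := ⟨_, rfl⟩
  have hDγ : W.D γ = 0 := by rw [hγ]; exact hk 3 (by norm_num)
  have hcomm : ∀ (m k : ℤ) (x : V), W.P m L (W.P k L x) = W.P k L (W.P m L x)
      + ((m:ℂ) - k) • W.P (m+k-1) L x + ((Ring.choose m 3 : ℤ) : ℂ) • W.P (m+k-3) γ x := by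
    intro m k x
    have := W.comm_fin L L 4 (fun j hj => hk0 j (by omega) (by omega)) m k x
    have h2 : W.P ((2:ℕ):ℤ) L L = 0 := hk0 2 (by norm_num) (by norm_num)
    simp only [sum_range_succ, sum_range_zero, h2] at this
    simp only [Nat.cast_one, Nat.cast_zero, Nat.cast_ofNat, Ring.choose_zero_right, 
      Ring.choose_one_right, Int.cast_one, one_smul, ← hγ,
      zero_add, sub_zero, h0, W.transl_inv, h1, map_smul, LinearMap.smul_apply, map_zero,
      LinearMap.zero_apply, smul_zero, add_zero] at this
    rw [sub_eq_iff_eq_add'] at this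
    rw [this]; push_cast; module
  -- positive modes through the coordinate
  have hcr : ∀ (k : ℕ) x y, c (W.P k y (c x • L)) = c (W.P k y x) := by
    intro k x y
    have := (com_kerT (c3 x) y).symm k
    rw [map_sub, sub_eq_zero] at this
    rw [this]
  obtain ⟨s, hs⟩ : ∃ s : ℕ → ℕ → ℂ[X], ∀ k i, s k i = c (W.P k L ((X^i : ℂ[X]) • L)) :=
    ⟨_, fun _ _ => rfl⟩
  have hs_mono : ∀ (k i : ℕ) (κ : ℂ) x, c x = C κ * X^i → c (W.P k L x) = C κ * s k i := by
    intro k i κ x hx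
    rw [← hcr, hx, mul_smul, C_smul, map_smul, hcs, smul_eq_C_mul, hs]
  have hs_succ : ∀ k i, s (k+1) (i+1) = X * s (k+1) i + ((k:ℂ)+1) • s k i := by
    intro k i
    rw [hs, hs, hs, pow_succ', mul_smul, hW.hX, W.P_D, map_add, hcD, hcs,
      show ((k+1 : ℕ) : ℤ) - 1 = k by push_cast; ring]
    push_cast; rfl
  have s0 : ∀ i, s 0 i = X^(i+1) := by
    intro i; rw [hs, Nat.cast_zero, h0, hcD, map_smul, c1, smul_eq_mul, mul_one, pow_succ']
  have s1 : ∀ i, s 1 i = ((i:ℂ)+2) • X^i := by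
    intro i
    induction i with
    | zero =>
      rw [hs, pow_zero, one_smul, Nat.cast_one, h1, hcs, c1]; simp
    | succ i ih =>
      rw [hs_succ 0, ih, s0, mul_smul_comm, ← pow_succ']; push_cast; module
  have sk0 : ∀ k, 2 ≤ k → s k 0 = 0 := by
    intro k hk'
    rw [hs, pow_zero, one_smul, ck k hk']
  have hcoe : ∀ (a : ℂ) (p q : ℂ[X]), p * (a • q) = a • (p * q) := fun a p q => mul_smul_comm a p q
  have s21 : s 2 1 = (4:ℂ) • 1 := by
    rw [hs_succ 1 0, sk0 2 le_rfl, s1]; simp; norm_num [smul_smul]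
  have s22 : s 2 2 = (10:ℂ) • X := by
    rw [hs_succ 1 1, s21, s1, hcoe, smul_smul]; push_cast; rw [mul_one, pow_one]; module
  have s23 : s 2 3 = (18:ℂ) • X^2 := by
    rw [hs_succ 1 2, s22, s1, hcoe, smul_smul]; push_cast; rw [← sq]; module
  have s24 : s 2 4 = (28:ℂ) • X^3 := by
    rw [hs_succ 1 3, s23, s1, hcoe, smul_smul]; push_cast; rw [← pow_succ']; module
  have s31 : s 3 1 = 0 := by rw [hs_succ 2 0, sk0 2 le_rfl, sk0 3 (by norm_num)]; simp
  have s32 : s 3 2 = (12:ℂ) • 1 := by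
    rw [hs_succ 2 1, s31, s21, smul_smul]; push_cast; rw [mul_zero]; module
  have s41 : s 4 1 = 0 := by
    rw [hs_succ 3 0, sk0 4 (by norm_num), sk0 3 (by norm_num)]; simp
  have s42 : s 4 2 = 0 := by rw [hs_succ 3 1, s31, s41]; simp
  have s43 : s 4 3 = (48:ℂ) • 1 := by
    rw [hs_succ 3 2, s42, s32, smul_smul]; push_cast; rw [mul_zero]; module
  have s51 : s 5 1 = 0 := by
    rw [hs_succ 4 0, sk0 4 (by norm_num), sk0 5 (by norm_num)]; simp
  have s52 : s 5 2 = 0 := by rw [hs_succ 4 1, s41, s51]; simp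
  have s53 : s 5 3 = 0 := by rw [hs_succ 4 2, s42, s52]; simp
  have s54 : s 5 4 = (240:ℂ) • 1 := by
    rw [hs_succ 4 3, s53, s43, smul_smul]; push_cast; rw [mul_zero]; module
  -- eigenvectors of the first mode
  have hc1 : ∀ x, c (W.P 1 L x) = (c x).sum (fun i a => C a * (((i:ℂ)+2) • X^i)) := by
    intro x
    rw [show (1:ℤ) = ((1:ℕ):ℤ) by rfl, ← hcr]
    conv_lhs => rw [(c x).as_sum_support_C_mul_X_pow, sum_smul, map_sum, map_sum]
    rw [Polynomial.sum]
    apply sum_congr rfl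
    intro i _
    rw [hs_mono 1 i ((c x).coeff i) _ (by rw [map_smul, c1, smul_eq_mul, mul_one]), s1]
  have heig : ∀ (n : ℕ) x, W.P 1 L x = ((n:ℂ)+2) • x → c x = C ((c x).coeff n) * X^n := by
    intro n x hx
    have e := hc1 x
    rw [hx, hcs] at e
    ext i
    have e2 := congrArg (fun p => p.coeff i) e
    simp only [coeff_smul, Polynomial.sum, finsetSum_coeff, coeff_C_mul, coeff_X_pow, smul_eq_mul,
      mul_ite, mul_one, mul_zero] at e2
    rw [sum_ite_eq] at e2
    rw [coeff_C_mul, coeff_X_pow]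
    by_cases hi : i = n
    · subst hi; simp
    · rw [if_neg hi, mul_zero]
      by_contra hne
      rw [if_pos (by rwa [mem_support_iff])] at e2
      have : ((n:ℂ) - i) * (c x).coeff i = 0 := by linear_combination e2
      rcases mul_eq_zero.1 this with h | h
      · apply hi
        have : ((n:ℕ):ℂ) = i := by linear_combination h
        exact (Nat.cast_injective this).symm
      · exact hne h
  have ch1 : Ring.choose (1:ℤ) 3 = 0 := by
    have := Ring.choose_natCast (R := ℤ) 1 3
    rw [show Nat.choose 1 3 = 0 by rfl] at this; simpa using this
  have ch2 : Ring.choose (2:ℤ) 3 = 0 := by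
    have := Ring.choose_natCast (R := ℤ) 2 3
    rw [show Nat.choose 2 3 = 0 by rfl] at this; simpa using this
  have ch3 : Ring.choose (3:ℤ) 3 = 1 := by
    have := Ring.choose_natCast (R := ℤ) 3 3
    rw [show Nat.choose 3 3 = 1 by rfl] at this; simpa using this
  have ch4 : Ring.choose (4:ℤ) 3 = 4 := by
    have := Ring.choose_natCast (R := ℤ) 4 3
    rw [show Nat.choose 4 3 = 4 by rfl] at this; simpa using this
  have ch5 : Ring.choose (5:ℤ) 3 = 10 := by
    have := Ring.choose_natCast (R := ℤ) 5 3
    rw [show Nat.choose 5 3 = 10 by rfl] at this; simpa using this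
  have z2 : W.P 2 L L = 0 := hk0 2 (by norm_num) (by norm_num)
  have z4 : W.P 4 L L = 0 := hk0 4 (by norm_num) (by norm_num)
  have z5 : W.P 5 L L = 0 := hk0 5 (by norm_num) (by norm_num)
  obtain ⟨G, hG⟩ : ∃ G, G = W.P (-1) γ L := ⟨_, rfl⟩
  have hG' : W.P (-1) L γ = G := by rw [hG]; exact ((com_kerT hDγ L).mul_comm).symm
  -- level four
  obtain ⟨y, hy⟩ : ∃ y, y = W.P (-1) L L := ⟨_, rfl⟩
  have y1 : W.P 1 L y = (((2:ℕ):ℂ)+2) • y := by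
    rw [hy, hcomm, h1, ch1]; norm_num; module
  have y2 : W.P 2 L y = (3:ℂ) • W.D L := by
    rw [hy, hcomm, z2, ch2]; norm_num [h0]
  have y3 : W.P 3 L y = (8:ℂ) • L + (2:ℂ) • G := by
    rw [hy, hcomm, ← hγ, ch3, hG']; norm_num [h1, ← hG]; module
  have cy := heig 2 y y1
  have a2 := hs_mono 2 2 _ y cy
  have a3 := hs_mono 3 2 _ y cy
  rw [s22, Nat.cast_ofNat, y2, hcs, hcD, c1] at a2
  rw [s32, Nat.cast_ofNat, y3, map_add, hcs, hcs,
    c1] at a3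
  have b2 := congrArg (fun p => p.coeff 1) a2
  have b3 := congrArg (fun p => p.coeff 0) a3
  simp at b2 b3
  -- level six
  obtain ⟨x, hx⟩ : ∃ x, x = W.P (-3) L L := ⟨_, rfl⟩
  have x1 : W.P 1 L x = (((4:ℕ):ℂ)+2) • x := by
    rw [hx, hcomm, h1, ch1]; norm_num; module
  have x2 : W.P 2 L x = (5:ℂ) • W.P (-2) L L := by
    rw [hx, hcomm, z2, ch2]; norm_num
  have x5 : W.P 5 L x = (16:ℂ) • L + (10:ℂ) • G := by
    rw [hx, hcomm, z5, ch5]; norm_num [h1, ← hG]; module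
  have x42 : W.P 4 L (W.P 2 L x) = (60:ℂ) • L + (20:ℂ) • G := by
    rw [x2, map_smul, hcomm, z4, ch4]; norm_num [h1, ← hG]; module
  have cx := heig 4 x x1
  have d5 := hs_mono 5 4 _ x cx
  have d2 := hs_mono 2 4 _ x cx
  rw [s24, ← smul_eq_C_mul, smul_smul, smul_eq_C_mul] at d2
  have d4 := hs_mono 4 3 _ _ d2
  rw [s43, Nat.cast_ofNat, Nat.cast_ofNat, x42, map_add, hcs,
    hcs, c1] at d4
  rw [s54, Nat.cast_ofNat, x5, map_add, hcs, hcs,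
    c1] at d5
  have e4 := congrArg (fun p => p.coeff 0) d4
  have e5 := congrArg (fun p => p.coeff 0) d5
  simp at e4 e5
  have : (28:ℂ) = 0 := by
    linear_combination (28/49.6 : ℂ) * (e4 - 5.6 * e5 + 18 * b3 - 21.6 * b2)
  norm_num at this

lemma Minl.false (hM : W.Minl) : False := by
  have hW := hM.good
  obtain ⟨L, hL, h0, hgen⟩ := hM.rk1
  obtain ⟨c, c1, c2, c3, c4, ck⟩ := hW.vir hL h0 hgen
  obtain ⟨τ, hτ, hL1⟩ : ∃ τ, W.D τ = 0 ∧ W.P 1 L L = (2:ℂ) • L + τ := by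
    refine ⟨_, c3 (W.P 1 L L), ?_⟩
    rw [c4, show (2:ℂ[X]) = C 2 by rfl, C_smul]; abel
  have hq : ∀ q : ℂ[X], W.D (q • τ) = 0 := by
    intro q; rw [← hW.hX, smul_comm, hW.hX, hτ, smul_zero]
  have hp1 : ∀ z, W.P 1 τ z = 0 := fun z => com_of_D hτ 1 (by norm_num) z
  have hp2 : ∀ z, W.P 1 z τ = 0 := fun z => by
    have := (com_kerT hτ z).symm 1
    simpa using this
  refine hW.no_vir (L := L + (1/2:ℂ) • τ) ?_ ?_ ?_ ?_
  · rw [map_add, map_smul, hτ, smul_zero, add_zero]; exact hL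
  · intro y
    rw [map_add, LinearMap.add_apply, h0, map_smul, LinearMap.smul_apply,
      com_of_D hτ 0 (by norm_num), smul_zero, add_zero]
  · intro x
    obtain ⟨q, σ, hσ, hx⟩ := hgen x
    refine ⟨q, σ - q • ((1/2:ℂ) • τ), ?_, ?_⟩
    · rw [smul_comm, map_sub, map_smul, hq, hσ]; simp
    · rw [hx, smul_add]; abel
  · rw [map_add, map_add, LinearMap.add_apply, LinearMap.add_apply, map_smul, map_smul, map_smul,
      LinearMap.smul_apply, LinearMap.smul_apply, hp1, hp1, hp2, hL1]
    module

end VertexAlgebra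
end Chunk11

section Chunk12
open Finset Polynomial

namespace VertexAlgebra

section final
variable {V : Type*} [AddCommGroup V] [Module ℂ V] {W : VertexAlgebra V}

lemma Good.dom_comm [Module ℂ[X] V] [IsScalarTower ℂ ℂ[X] V] [Module.Finite ℂ[X] V]
    (hW : W.Good) (a b : V) : W.Com a b := by
  by_cases hD : ∀ x, W.D x = 0
  · exact com_kerT (hD a) b
  push Not at hD
  classical
  have hex : ∃ n : ℕ, ∃ S : Submodule ℂ[X] V, W.IsSub S ∧ (∃ x ∈ S, W.D x ≠ 0) ∧
      Module.finrank ℂ[X] S = n := by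
    obtain ⟨x, hx⟩ := hD
    exact ⟨_, ⊤, ⟨trivial, fun _ _ _ _ _ => trivial⟩, ⟨x, trivial, hx⟩, rfl⟩
  obtain ⟨S, hS, ⟨v, hv, hDv⟩, hr⟩ := Nat.find_spec hex
  have hG := hW.sub hS
  by_cases hnc : ∃ x y, ¬ (W.sub hW.hX hS).Com x y
  · exfalso
    refine Minl.false (W := W.sub hW.hX hS) ⟨hG, ?_, hnc⟩
    rintro S' hS' ⟨x, hx, hDx⟩
    rw [hr]
    apply Nat.find_min' hex
    refine ⟨S'.map S.subtype, ⟨⟨_, hS'.vac, rfl⟩, ?_⟩, ⟨x, ⟨x, hx, rfl⟩, ?_⟩, ?_⟩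
    · rintro n _ ⟨x, hx, rfl⟩ _ ⟨y, hy, rfl⟩
      exact ⟨_, hS'.prod n x hx y hy, rfl⟩
    · intro h
      exact hDx (Subtype.ext h)
    · exact (LinearEquiv.finrank_eq
        (Submodule.equivMapOfInjective S.subtype S.injective_subtype S')).symm
  · push Not at hnc
    have hvv : W.Com v v := fun j => congrArg Subtype.val (hnc ⟨v, hv⟩ ⟨v, hv⟩ j)
    exact hW.beta' hvv hDv a b

lemma dom_comm (hfin : W.IsFinite) (hd : W.IsDom) (a b : V) : W.Com a b := by
  let := W.hmod
  have := W.hmod_tower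
  have := W.hmod_finite hfin
  have hG : W.Good := ⟨by intro v; rw [hmod_smul]; simp, hd⟩
  exact hG.dom_comm a b

lemma reduced_comm (hfin : W.IsFinite) (hred : W.IsReduced) (a b : V) : W.Com a b := by
  intro j
  by_contra hne
  obtain ⟨I, hI, hd, hc⟩ := W.reduce_dom hfin hred _ hne
  apply hc
  have := dom_comm (W.quot_finite hI hfin) hd (Submodule.Quotient.mk a) (Submodule.Quotient.mk b) j
  exact (Submodule.Quotient.mk_eq_zero I).1 this
end final
end VertexAlgebra
end Chunk12

open VertexAlgebra in
/-- every finite reduced vertex algebra is nilpotent: the lower central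
series `V^[0] = V`, `V^[n+1] = [V, V^[n]]` of the underlying Lie conformal algebra
terminates at zero. -/
theorem finite_reduced_is_nilpotent {V : Type*} [AddCommGroup V] [Module ℂ V]
    (W : VertexAlgebra V) (hfin : W.IsFinite) (hred : W.IsReduced) :
    ∃ N : ℕ, W.lcsOf ⊤ N = ⊥ := by
  refine ⟨1, ?_⟩
  change Submodule.span ℂ _ = ⊥
  rw [Submodule.span_eq_bot]
  rintro _ ⟨a, -, b, -, j, rfl⟩
  exact reduced_comm hfin hred a b j
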